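/- arXiv:2111.11694 — 2 statements merged into one kernel-verified Lean document; each statement's English description precedes it below -/
import Mathlib

section
/- For every integer d ≥ 1 there exists a constant C_d > 0 depending only on d such that the following holds. Fix integers n₁,…,n_d ≥ 2, reals σ > 0 and V > 0, a vector θ* ∈ C(V), and any map θ̂ : ℝ^{I₀} → ℝ^{I₀} such that for every y ∈ ℝ^{I₀}, θ̂(y) ∈ C(V) and ‖y − θ̂(y)‖₂ ≤ ‖y − θ‖₂ for all θ ∈ C(V) (i.e., θ̂(y) is the Euclidean projection of y onto the closed convex set C(V); such θ̂ exists, is unique, and is 1-Lipschitz). Then ∫ (1/n)·‖θ̂(θ* + ξ) − θ*‖₂² dμ_σ(ξ) ≤ C_d·(σ²V^{1/2}/n)^{4/5}·(log(2 + V·n^{1/2}/σ))^{3(2d−1)/5} + C_d·(σ²/n)·(log(2 + V·n^{1/2}/σ))^{3(2d−1)/4} + C_d·(σ²/n)·(log n)². -/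
open Finset MeasureTheory

/-- The discrete mixed difference `(D^(β)θ)_i` (with `ℕ`-valued multi-indices). -/
noncomputable def mixedDiff (d : ℕ) (β : Fin d → ℕ) (θ : (Fin d → ℕ) → ℝ)
    (i : Fin d → ℕ) : ℝ :=
  ∑ δ ∈ Fintype.piFinset (fun k => Finset.range (β k + 1)),
    (-1 : ℝ) ^ (∑ k, δ k) * (∏ k, ((β k).choose (δ k) : ℝ)) * θ (fun k => i k - δ k)

/-- The index set `I₀^(β)`. -/
def idxBeta (d : ℕ) (n β : Fin d → ℕ) : Finset (Fin d → ℕ) :=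
  Fintype.piFinset fun k =>
    if β k = Finset.univ.sup β then Finset.Ico (Finset.univ.sup β) (n k)
    else {β k}

/-- The complexity measure `V₂(θ)`. -/
noncomputable def V2 (d : ℕ) (n : Fin d → ℕ) (θ : (Fin d → ℕ) → ℝ) : ℝ :=
  ∑ β ∈ (Fintype.piFinset fun _ : Fin d => Finset.range 3).filter
      (fun β => Finset.univ.sup β = 2),
    (∏ k, (n k : ℝ) ^ (if β k = 2 then 1 else β k)) *
      ∑ i ∈ idxBeta d n β, |mixedDiff d β θ i|

/-- Extension of a vector indexed by `I₀ = Π_k {0,…,n_k-1}` to all of `ℕ^d` (by `0`). -/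
noncomputable def latExtend (d : ℕ) (n : Fin d → ℕ)
    (θ : (∀ k : Fin d, Fin (n k)) → ℝ) : (Fin d → ℕ) → ℝ :=
  fun j => if h : ∀ k, j k < n k then θ (fun k => ⟨j k, h k⟩) else 0

/-- The constraint set `C(V) = {θ : V₂(θ) ≤ V}`. -/
def Cset (d : ℕ) (n : Fin d → ℕ) (V : ℝ) : Set ((∀ k : Fin d, Fin (n k)) → ℝ) :=
  { θ | V2 d n (latExtend d n θ) ≤ V }

/-- The product Gaussian measure on `ℝ^{I₀}` with i.i.d. `N(0, σ²)` coordinates. -/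
noncomputable def gaussPi (d : ℕ) (n : Fin d → ℕ) (σ : ℝ) :
    Measure ((∀ k : Fin d, Fin (n k)) → ℝ) :=
  Measure.pi fun _ => ProbabilityTheory.gaussianReal 0 ⟨σ ^ 2, sq_nonneg σ⟩


/-- One-dimensional atoms (unnormalised). -/
noncomputable def atm (j i : ℕ) : ℝ := if j = 0 then 1 else ((i + 1 - j : ℕ) : ℝ)

/-- One-dimensional difference matrix. -/
noncomputable def D1 (j m : ℕ) : ℝ :=
  ∑ δ ∈ Finset.range (min j 2 + 1),
    (-1 : ℝ) ^ δ * ((min j 2).choose δ : ℝ) * (if m = j - δ then 1 else 0)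

/-- The tensor coefficients. -/
noncomputable def coefM {d : ℕ} {n : Fin d → ℕ} (θ : (∀ k : Fin d, Fin (n k)) → ℝ)
    (j : ∀ k : Fin d, Fin (n k)) : ℝ :=
  ∑ m, (∏ k, D1 (j k) (m k)) * θ m

/-- The weights. -/
noncomputable def wgt {d : ℕ} {n : Fin d → ℕ} (j : ∀ k : Fin d, Fin (n k)) : ℝ :=
  ∏ k, (if (j k : ℕ) = 0 then (1 : ℝ) else (n k : ℝ))

lemma latExtend_eq {d : ℕ} {n : Fin d → ℕ} (θ : (∀ k : Fin d, Fin (n k)) → ℝ)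
    (x : Fin d → ℕ) (hx : ∀ k, x k < n k) :
    latExtend d n θ x = ∑ m : (∀ k : Fin d, Fin (n k)),
      (∏ k, (if (m k : ℕ) = x k then (1 : ℝ) else 0)) * θ m := by
  classical
  rw [Finset.sum_eq_single (fun k => (⟨x k, hx k⟩ : Fin (n k)))]
  · simp [latExtend, hx]
  · intro b _ hb
    have : ∃ k, (b k : ℕ) ≠ x k := by
      by_contra h
      push Not at h
      exact hb (funext fun k => Fin.ext (h k))
    obtain ⟨k, hk⟩ := this
    rw [Finset.prod_eq_zero (Finset.mem_univ k) (by simp [hk])]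
    simp
  · simp

lemma mixedDiff_eq {d : ℕ} {n : Fin d → ℕ} (θ : (∀ k : Fin d, Fin (n k)) → ℝ)
    (j : ∀ k : Fin d, Fin (n k)) :
    mixedDiff d (fun k => min (j k : ℕ) 2) (latExtend d n θ) (fun k => (j k : ℕ)) = coefM θ j := by
  classical
  unfold mixedDiff coefM D1
  simp_rw [Finset.prod_univ_sum, Finset.sum_mul]
  rw [Finset.sum_comm]
  refine Finset.sum_congr rfl fun δ _ => ?_
  rw [latExtend_eq θ _ (fun k => lt_of_le_of_lt (Nat.sub_le _ _) (j k).2), Finset.mul_sum]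
  refine Finset.sum_congr rfl fun m _ => ?_
  rw [Finset.prod_mul_distrib, Finset.prod_mul_distrib, Finset.prod_pow_eq_pow_sum]
  ring

lemma D1_expand (f : ℕ → ℝ) (i N : ℕ) :
    ∑ j ∈ Finset.range (N + 2), atm j i *
      (∑ δ ∈ Finset.range (min j 2 + 1), (-1 : ℝ) ^ δ * ((min j 2).choose δ : ℝ) * f (j - δ)) =
    if i ≤ N + 1 then f i else f (N + 1) + ((i : ℝ) - N - 1) * (f (N + 1) - f N) := by
  induction N with
  | zero =>
    have : (if i ≤ 0 + 1 then f i else f (0 + 1) + ((i : ℝ) - (0 : ℕ) - 1) * (f (0 + 1) - f 0)) =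
       f 1 + ((i : ℝ) - 1) * (f 1 - f 0) := by
      split_ifs with h
      · have : i = 0 ∨ i = 1 := by omega
        rcases this with rfl | rfl <;> simp
      · simp
    rw [this]
    simp [Finset.sum_range_succ, atm]
    ring
  | succ N ih =>
    rw [Finset.sum_range_succ, ih]
    have h2 : min (N + 2) 2 = 2 := by omega
    rw [show N + 1 + 1 = N + 2 from rfl, h2]
    simp only [Finset.sum_range_succ, Finset.sum_range_zero, atm]
    rw [if_neg (by omega : ¬ (N + 2 = 0))]
    rw [show N + 2 - 0 = N + 2 from rfl, show N + 2 - 1 = N + 1 from rfl, show N + 2 - 2 = N from rfl]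
    norm_num [Nat.choose]
    by_cases h : i ≤ N + 1
    · rw [if_pos h, if_pos (by omega)]
      rw [show i + 1 - (N + 2) = 0 by omega]; simp
    · rw [if_neg h]
      obtain ⟨t, rfl⟩ : ∃ t, i = N + 2 + t := ⟨i - (N + 2), by omega⟩
      rw [show N + 2 + t + 1 - (N + 2) = t + 1 by omega]
      split_ifs with h3
      · have : t = 0 := by omega
        subst this
        push_cast; simp; ring
      · push_cast; ring

lemma atm_D1 (n : ℕ) (hn : 2 ≤ n) (i m : Fin n) :
    ∑ j : Fin n, atm j i * D1 j m = if i = m then 1 else 0 := by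
  obtain ⟨N, rfl⟩ : ∃ N, n = N + 2 := ⟨n - 2, by omega⟩
  have := D1_expand (fun x => if (m : ℕ) = x then (1 : ℝ) else 0) i N
  rw [if_pos (by omega)] at this
  rw [Finset.sum_range] at this
  unfold D1
  rw [this]
  simp [Fin.ext_iff, eq_comm]

lemma theta_expand {d : ℕ} {n : Fin d → ℕ} (hn : ∀ k, 2 ≤ n k)
    (θ : (∀ k : Fin d, Fin (n k)) → ℝ) (i : ∀ k : Fin d, Fin (n k)) :
    θ i = ∑ j, coefM θ j * ∏ k, atm (j k) (i k) := by
  classical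
  unfold coefM
  simp_rw [Finset.sum_mul]
  rw [Finset.sum_comm]
  have : ∀ m : (∀ k : Fin d, Fin (n k)),
      ∑ j : (∀ k : Fin d, Fin (n k)), (∏ k, D1 (j k) (m k)) * θ m * ∏ k, atm (j k) (i k)
      = (if i = m then 1 else 0) * θ m := by
    intro m
    have h1 : ∑ j : (∀ k : Fin d, Fin (n k)), ∏ k, (atm (j k) (i k) * D1 (j k) (m k)) =
        if i = m then 1 else 0 := by
      have := Finset.prod_univ_sum (fun k : Fin d => (Finset.univ : Finset (Fin (n k))))
        (fun k j => atm (j : ℕ) (i k) * D1 (j : ℕ) (m k))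
      rw [Fintype.piFinset_univ] at this
      rw [← this]
      simp_rw [atm_D1 _ (hn _)]
      by_cases h : i = m
      · simp [h]
      · rw [if_neg h]
        obtain ⟨k, hk⟩ := Function.ne_iff.mp h
        exact Finset.prod_eq_zero (Finset.mem_univ k) (by simp [hk])
    rw [← h1, Finset.sum_mul]
    refine Finset.sum_congr rfl fun j _ => ?_
    rw [Finset.prod_mul_distrib]; ring
  simp_rw [this]
  simp

lemma V2_eq {d : ℕ} {n : Fin d → ℕ} (hn : ∀ k, 2 ≤ n k)
    (θ : (∀ k : Fin d, Fin (n k)) → ℝ) :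
    V2 d n (latExtend d n θ) =
      ∑ j : (∀ k : Fin d, Fin (n k)) with (∃ k, 2 ≤ (j k : ℕ)), wgt j * |coefM θ j| := by
  classical
  unfold V2
  have hmaps : ∀ j ∈ (Finset.univ.filter (fun j : (∀ k : Fin d, Fin (n k)) => ∃ k, 2 ≤ (j k : ℕ))),
      (fun k => min (j k : ℕ) 2) ∈ (Fintype.piFinset fun _ : Fin d => Finset.range 3).filter
      (fun β => Finset.univ.sup β = 2) := by
    intro j hj
    simp only [Finset.mem_filter, Finset.mem_univ, true_and] at hj
    obtain ⟨k, hk⟩ := hj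
    simp only [Finset.mem_filter, Fintype.mem_piFinset, Finset.mem_range]
    refine ⟨fun k => by omega, le_antisymm (Finset.sup_le fun k _ => by omega) ?_⟩
    have := Finset.le_sup (f := fun k => min (j k : ℕ) 2) (Finset.mem_univ k)
    have h2 : min (j k : ℕ) 2 = 2 := by omega
    exact h2.ge.trans this
  rw [← Finset.sum_fiberwise_of_maps_to hmaps]
  refine Finset.sum_congr rfl fun β hβ => ?_
  simp only [Finset.mem_filter, Fintype.mem_piFinset, Finset.mem_range] at hβ
  obtain ⟨hβ3, hβ2⟩ := hβ
  rw [Finset.mul_sum]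
  symm
  refine Finset.sum_bij (fun j _ => fun k => (j k : ℕ)) ?_ ?_ ?_ ?_
  · intro j hj
    simp only [Finset.mem_filter, Finset.mem_univ, true_and] at hj
    obtain ⟨-, rfl⟩ := hj
    simp only [idxBeta, hβ2, Fintype.mem_piFinset]
    intro k
    split_ifs with h
    · simp only [Finset.mem_Ico]; exact ⟨by omega, (j k).2⟩
    · simp only [Finset.mem_singleton]; omega
  · intro a _ b _ h
    funext k
    exact Fin.ext (congrFun h k)
  · intro b hb
    simp only [idxBeta, hβ2, Fintype.mem_piFinset] at hb
    have hlt : ∀ k, b k < n k := by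
      intro k
      have h1 := hb k
      have h2 := hn k
      have h3 := hβ3 k
      split_ifs at h1 with h
      · exact (Finset.mem_Ico.mp h1).2
      · rw [Finset.mem_singleton] at h1; omega
    have hmin : ∀ k, min (b k) 2 = β k := by
      intro k
      have h1 := hb k
      have h3 := hβ3 k
      split_ifs at h1 with h
      · have := (Finset.mem_Ico.mp h1).1; omega
      · rw [Finset.mem_singleton] at h1; omega
    refine ⟨fun k => ⟨b k, hlt k⟩, ?_, rfl⟩
    simp only [Finset.mem_filter, Finset.mem_univ, true_and]
    refine ⟨?_, funext hmin⟩
    by_contra hcon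
    push Not at hcon
    have : Finset.univ.sup β ≤ 1 := Finset.sup_le fun k _ => by
      have := hmin k; have := hcon k; omega
    omega
  · intro j hj
    simp only [Finset.mem_filter, Finset.mem_univ, true_and] at hj
    obtain ⟨-, rfl⟩ := hj
    rw [← mixedDiff_eq]
    congr 1
    unfold wgt
    refine Finset.prod_congr rfl fun k _ => ?_
    by_cases h0 : (j k : ℕ) = 0
    · simp [h0]
    · rw [if_neg h0]
      by_cases h1 : (j k : ℕ) = 1
      · simp [h1]
      · have h2 : min (j k : ℕ) 2 = 2 := by omega
        simp [h2]

lemma coefM_sub {d : ℕ} {n : Fin d → ℕ} (θ η : (∀ k : Fin d, Fin (n k)) → ℝ)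
    (j : ∀ k : Fin d, Fin (n k)) : coefM (θ - η) j = coefM θ j - coefM η j := by
  simp [coefM, mul_sub]

lemma wgt_nonneg {d : ℕ} {n : Fin d → ℕ} (j : ∀ k : Fin d, Fin (n k)) : 0 ≤ wgt j :=
  Finset.prod_nonneg fun k _ => by split_ifs <;> positivity

lemma V2_sub_le {d : ℕ} {n : Fin d → ℕ} (hn : ∀ k, 2 ≤ n k)
    (θ η : (∀ k : Fin d, Fin (n k)) → ℝ) :
    V2 d n (latExtend d n (θ - η)) ≤ V2 d n (latExtend d n θ) + V2 d n (latExtend d n η) := by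
  rw [V2_eq hn, V2_eq hn, V2_eq hn, ← Finset.sum_add_distrib]
  refine Finset.sum_le_sum fun j _ => ?_
  rw [coefM_sub, ← mul_add]
  exact mul_le_mul_of_nonneg_left (abs_sub _ _) (wgt_nonneg j)

lemma frame_of_proj {E : Type*} [NormedAddCommGroup E] [InnerProductSpace ℝ E]
    [FiniteDimensional ℝ E] (Q : E →ₗ[ℝ] E) (hs : Q.IsSymmetric) (hi : ∀ x, Q (Q x) = Q x)
    (hr : Module.finrank ℝ (LinearMap.range Q) ≤ 4) :
    ∃ v : Fin 4 → E, (∀ x, Q x = ∑ r, inner ℝ (v r) x • v r) ∧ (∀ r, Q (v r) = v r) ∧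
      ∀ r, ‖v r‖ ≤ 1 := by
  classical
  set N := Module.finrank ℝ (LinearMap.range Q) with hN
  let u := stdOrthonormalBasis ℝ (LinearMap.range Q)
  let v : Fin 4 → E := fun r => if h : (r : ℕ) < N then (u ⟨r, h⟩ : E) else 0
  have hQu : ∀ s, Q (u s : E) = (u s : E) := by
    intro s
    obtain ⟨y, hy⟩ := (u s).2
    rw [← hy, hi]
  refine ⟨v, ?_, ?_, ?_⟩
  · intro x
    have h1 : (⟨Q x, x, rfl⟩ : LinearMap.range Q) = ∑ s, inner ℝ (u s) (⟨Q x, x, rfl⟩ : LinearMap.range Q) • u s :=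
      (u.sum_repr' _).symm
    have h2 : Q x = ∑ s, inner ℝ (u s : E) x • (u s : E) := by
      have := congrArg (fun z : LinearMap.range Q => (z : E)) h1
      simp only [Submodule.coe_sum, Submodule.coe_smul, Submodule.coe_inner] at this
      refine this.trans (Finset.sum_congr rfl fun s _ => ?_)
      rw [← hs, hQu]
    rw [h2]
    have h3 : ∑ r : Fin 4, inner ℝ (v r) x • v r =
        ∑ r ∈ Finset.range 4, if h : r < N then inner ℝ (u ⟨r, h⟩ : E) x • (u ⟨r, h⟩ : E) else 0 := by
      rw [Finset.sum_range]
      refine Finset.sum_congr rfl fun r _ => ?_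
      simp only [v]
      split_ifs <;> simp
    have h4 : ∑ r ∈ Finset.range N, (if h : r < N then inner ℝ (u ⟨r, h⟩ : E) x • (u ⟨r, h⟩ : E) else 0) =
       ∑ r ∈ Finset.range 4, if h : r < N then inner ℝ (u ⟨r, h⟩ : E) x • (u ⟨r, h⟩ : E) else 0 := by
      apply Finset.sum_subset (Finset.range_mono hr)
      intro r _ hr'
      rw [dif_neg (by simpa using hr')]
    rw [h3, ← h4, Finset.sum_range]
    refine Finset.sum_congr rfl fun s _ => ?_
    rw [dif_pos s.2]
  · intro r
    simp only [v]
    split_ifs with h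
    · exact hQu _
    · simp
  · intro r
    simp only [v]
    split_ifs with h
    · have := u.orthonormal.1 ⟨r, h⟩
      rw [Submodule.norm_coe]
      exact this.le
    · simp

/-- Indicator times a function, on the block `b` of level `l`. -/
noncomputable def blk (n l b : ℕ) (f : ℕ → ℝ) : EuclideanSpace ℝ (Fin n) :=
  WithLp.toLp 2 fun i => if (i : ℕ) * 2 ^ l / n = b then f i else 0

/-- Piecewise linear functions on a block. -/
noncomputable def SB (n l b : ℕ) : Submodule ℝ (EuclideanSpace ℝ (Fin n)) :=
  Submodule.span ℝ {blk n l b (fun _ => 1), blk n l b (fun i => (i : ℝ))}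

lemma SB_supp {n l b : ℕ} {v : EuclideanSpace ℝ (Fin n)} (hv : v ∈ SB n l b) (i : Fin n)
    (hi : (i : ℕ) * 2 ^ l / n ≠ b) : v i = 0 := by
  rw [SB, Submodule.mem_span_pair] at hv
  obtain ⟨a, c, rfl⟩ := hv
  simp [blk, hi]

lemma SB_orth {n l b b' : ℕ} (h : b ≠ b') {v w : EuclideanSpace ℝ (Fin n)} (hv : v ∈ SB n l b)
    (hw : w ∈ SB n l b') : inner ℝ v w = 0 := by
  rw [PiLp.inner_apply]
  refine Finset.sum_eq_zero fun i _ => ?_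
  by_cases hi : (i : ℕ) * 2 ^ l / n = b
  · rw [SB_supp hw i (by omega)]; simp
  · rw [SB_supp hv i hi]; simp

lemma blk_split (n l b : ℕ) (f : ℕ → ℝ) :
    blk n l b f = blk n (l + 1) (2 * b) f + blk n (l + 1) (2 * b + 1) f := by
  ext i
  have hk : (i : ℕ) * 2 ^ l / n = ((i : ℕ) * 2 ^ (l + 1) / n) / 2 := by
    rw [Nat.div_div_eq_div_mul, pow_succ, ← mul_assoc, Nat.mul_div_mul_right _ _ (by norm_num)]
  simp only [blk, PiLp.add_apply]
  rw [hk]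
  set t := (i : ℕ) * 2 ^ (l + 1) / n
  by_cases h1 : t = 2 * b
  · rw [if_pos (by omega), if_pos h1, if_neg (by omega)]; simp
  · by_cases h2 : t = 2 * b + 1
    · rw [if_pos (by omega), if_neg h1, if_pos h2]; simp
    · rw [if_neg (by omega), if_neg h1, if_neg h2]; simp

lemma SB_le (n l b : ℕ) : SB n l b ≤ SB n (l + 1) (2 * b) ⊔ SB n (l + 1) (2 * b + 1) := by
  rw [SB, Submodule.span_le]
  intro x hx
  simp only [Set.mem_insert_iff, Set.mem_singleton_iff] at hx
  rcases hx with rfl | rfl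
  · rw [blk_split]
    exact Submodule.add_mem_sup (Submodule.subset_span (by simp)) (Submodule.subset_span (by simp))
  · rw [blk_split]
    exact Submodule.add_mem_sup (Submodule.subset_span (by simp)) (Submodule.subset_span (by simp))

lemma SB_finrank (n l b : ℕ) : Module.finrank ℝ (SB n l b) ≤ 2 := by
  classical
  unfold SB
  have := finrank_span_le_card (R := ℝ) ({blk n l b (fun _ => 1), blk n l b (fun i => (i : ℝ))} : Set _)
  refine this.trans ?_
  rw [Set.toFinset_insert, Set.toFinset_singleton]
  exact Finset.card_le_two

/-- Projection on a block. -/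
noncomputable def PB (n l b : ℕ) : EuclideanSpace ℝ (Fin n) →ₗ[ℝ] EuclideanSpace ℝ (Fin n) :=
  ((SB n l b).starProjection : EuclideanSpace ℝ (Fin n) →L[ℝ] EuclideanSpace ℝ (Fin n))

lemma PB_mem (n l b : ℕ) (x) : PB n l b x ∈ SB n l b := by
  simp [PB]

lemma PB_of_mem {n l b : ℕ} {x} (h : x ∈ SB n l b) : PB n l b x = x := by
  simpa [PB] using Submodule.starProjection_eq_self_iff.mpr h

lemma PB_symm (n l b : ℕ) : (PB n l b).IsSymmetric := by
  intro x y
  simp [PB, Submodule.inner_starProjection_left_eq_right]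

lemma PB_zero {n l b : ℕ} {x} (h : ∀ w ∈ SB n l b, inner ℝ w x = 0) : PB n l b x = 0 := by
  have := (Submodule.starProjection_apply_eq_zero_iff (K := SB n l b) (v := x)).mpr
    ((Submodule.mem_orthogonal _ _).mpr h)
  simpa [PB] using this

/-- Detail projection. -/
noncomputable def QB (n l b : ℕ) : EuclideanSpace ℝ (Fin n) →ₗ[ℝ] EuclideanSpace ℝ (Fin n) :=
  PB n (l + 1) (2 * b) + PB n (l + 1) (2 * b + 1) - PB n l b

lemma U_id {n l b : ℕ} {x} (hx : x ∈ SB n (l + 1) (2 * b) ⊔ SB n (l + 1) (2 * b + 1)) :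
    PB n (l + 1) (2 * b) x + PB n (l + 1) (2 * b + 1) x = x := by
  obtain ⟨y, hy, z, hz, rfl⟩ := Submodule.mem_sup.mp hx
  rw [map_add, map_add, PB_of_mem hy, PB_of_mem hz,
    PB_zero (fun w hw => SB_orth (by omega) hw hz), PB_zero (fun w hw => SB_orth (by omega) hw hy)]
  simp

lemma QB_mem (n l b : ℕ) (x) : QB n l b x ∈ SB n (l + 1) (2 * b) ⊔ SB n (l + 1) (2 * b + 1) := by
  simp only [QB, LinearMap.sub_apply, LinearMap.add_apply]
  exact Submodule.sub_mem _ (Submodule.add_mem_sup (PB_mem _ _ _ _) (PB_mem _ _ _ _))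
    (SB_le _ _ _ (PB_mem _ _ _ _))

lemma QB_symm (n l b : ℕ) : (QB n l b).IsSymmetric :=
  ((PB_symm _ _ _).add (PB_symm _ _ _)).sub (PB_symm _ _ _)

lemma PB_QB (n l b : ℕ) (x) : PB n l b (QB n l b x) = 0 := by
  refine PB_zero fun w hw => ?_
  rw [← QB_symm]
  have : QB n l b w = 0 := by
    simp only [QB, LinearMap.sub_apply, LinearMap.add_apply]
    rw [U_id (SB_le _ _ _ hw), PB_of_mem hw, sub_self]
  rw [this, inner_zero_left]

lemma QB_idem (n l b : ℕ) (x) : QB n l b (QB n l b x) = QB n l b x := by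
  have key : ∀ y, QB n l b y = PB n (l + 1) (2 * b) y + PB n (l + 1) (2 * b + 1) y - PB n l b y :=
    fun _ => rfl
  rw [key (QB n l b x), U_id (QB_mem _ _ _ _), PB_QB, sub_zero]

lemma QB_rank (n l b : ℕ) : Module.finrank ℝ (LinearMap.range (QB n l b)) ≤ 4 := by
  have h1 : LinearMap.range (QB n l b) ≤ SB n (l + 1) (2 * b) ⊔ SB n (l + 1) (2 * b + 1) := by
    rintro _ ⟨x, rfl⟩; exact QB_mem _ _ _ _
  refine (Submodule.finrank_mono h1).trans ?_
  have := Submodule.finrank_add_le_finrank_add_finrank (SB n (l + 1) (2 * b)) (SB n (l + 1) (2 * b + 1))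
  have h2 := SB_finrank n (l + 1) (2 * b)
  have h3 := SB_finrank n (l + 1) (2 * b + 1)
  omega

lemma sum_range_two_mul {M : Type*} [AddCommMonoid M] (f : ℕ → M) (m : ℕ) :
    ∑ b ∈ Finset.range (2 * m), f b = ∑ b ∈ Finset.range m, (f (2 * b) + f (2 * b + 1)) := by
  induction m with
  | zero => simp
  | succ m ih =>
    rw [show 2 * (m + 1) = 2 * m + 1 + 1 by ring, Finset.sum_range_succ, Finset.sum_range_succ, ih,
      Finset.sum_range_succ, add_assoc]

lemma PB_tele (n L : ℕ) (x) : ∑ b ∈ Finset.range (2 ^ L), PB n L b x =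
    PB n 0 0 x + ∑ l ∈ Finset.range L, ∑ b ∈ Finset.range (2 ^ l), QB n l b x := by
  induction L with
  | zero => simp
  | succ L ih =>
    rw [Finset.sum_range_succ, ← add_assoc, ← ih, pow_succ, mul_comm, sum_range_two_mul,
      ← Finset.sum_add_distrib]
    refine Finset.sum_congr rfl fun b _ => ?_
    simp [QB]

lemma PB_full (n L : ℕ) (hL : n ≤ 2 ^ L) (x) :
    ∑ b ∈ Finset.range (2 ^ L), PB n L b x = x := by
  classical
  have hmain : (∑ b ∈ Finset.range (2 ^ L), PB n L b) = LinearMap.id := by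
    refine (EuclideanSpace.basisFun (Fin n) ℝ).toBasis.ext fun i => ?_
    simp only [OrthonormalBasis.coe_toBasis, LinearMap.sum_apply, LinearMap.id_apply]
    have hn : 0 < n := i.pos
    have hmem : (EuclideanSpace.basisFun (Fin n) ℝ) i ∈ SB n L ((i : ℕ) * 2 ^ L / n) := by
      apply Submodule.subset_span
      left
      ext i'
      simp only [blk, EuclideanSpace.basisFun_apply]
      by_cases h : i' = i
      · subst h; simp
      · have : (i' : ℕ) * 2 ^ L / n ≠ (i : ℕ) * 2 ^ L / n := by
          intro h2
          apply h
          have key : ∀ a b : ℕ, a < b → a * 2 ^ L / n < b * 2 ^ L / n := by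
            intro a b hab
            have : a * 2 ^ L / n + 1 ≤ b * 2 ^ L / n := by
              rw [← Nat.add_div_right _ hn]
              apply Nat.div_le_div_right
              nlinarith
            omega
          rcases lt_trichotomy (i' : ℕ) i with h3 | h3 | h3
          · exact absurd h2 (key _ _ h3).ne
          · exact Fin.ext h3
          · exact absurd h2 (key _ _ h3).ne'
        simp [this, h]
    rw [Finset.sum_eq_single ((i : ℕ) * 2 ^ L / n)]
    · exact PB_of_mem hmem
    · intro b _ hb
      exact PB_zero fun w hw => SB_orth hb hw hmem
    · intro h
      exfalso; apply h
      rw [Finset.mem_range, Nat.div_lt_iff_lt_mul hn, mul_comm]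
      exact Nat.mul_lt_mul_of_pos_left i.2 (by positivity)
  rw [← LinearMap.sum_apply, hmain, LinearMap.id_apply]

/-- The decay rate `2^{-3/2}`. -/
noncomputable def qq : ℝ := (Real.sqrt 8)⁻¹

lemma qq_pos : 0 < qq := by unfold qq; positivity

lemma qq_sq : qq ^ 2 = 1 / 8 := by
  unfold qq; rw [inv_pow, Real.sq_sqrt (by norm_num)]; norm_num

lemma qq_le : qq ≤ 1 / 2 := by
  have := qq_sq; have := qq_pos; nlinarith

lemma detail_atm {n l b : ℕ} (v : Fin n → ℝ)
    (hsupp : ∀ i : Fin n, (i : ℕ) * 2 ^ l / n ≠ b → v i = 0)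
    (h0 : ∑ i, v i = 0) (h1 : ∑ i : Fin n, v i * (i : ℝ) = 0) (hv : ∑ i, v i ^ 2 ≤ 1) (j : ℕ) :
    |∑ i : Fin n, v i * atm j i| ≤
      if b = (j - 1) * 2 ^ l / n then (n : ℝ) * Real.sqrt n * qq ^ l else 0 := by
  classical
  have hnn : (0 : ℝ) ≤ if b = (j - 1) * 2 ^ l / n then (n : ℝ) * Real.sqrt n * qq ^ l else 0 := by
    have := qq_pos
    split_ifs <;> positivity
  by_cases hj : j = 0
  · subst hj
    simp only [atm, if_true, mul_one, h0, abs_zero]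
    exact hnn
  have hatm : ∀ i, atm j i = ((i + 1 - j : ℕ) : ℝ) := fun i => by simp [atm, hj]
  by_cases c1 : ∀ i : Fin n, (i : ℕ) * 2 ^ l / n = b → (i : ℕ) + 1 ≤ j
  · have : ∑ i : Fin n, v i * atm j i = 0 := by
      refine Finset.sum_eq_zero fun i _ => ?_
      by_cases hi : (i : ℕ) * 2 ^ l / n = b
      · rw [hatm, Nat.sub_eq_zero_of_le (c1 i hi)]; simp
      · rw [hsupp i hi]; simp
    rw [this, abs_zero]; exact hnn
  by_cases c2 : ∀ i : Fin n, (i : ℕ) * 2 ^ l / n = b → j ≤ (i : ℕ) + 1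
  · have : ∑ i : Fin n, v i * atm j i = ∑ i : Fin n, (v i * (i : ℝ) + (1 - j) * v i) := by
      refine Finset.sum_congr rfl fun i _ => ?_
      by_cases hi : (i : ℕ) * 2 ^ l / n = b
      · rw [hatm, Nat.cast_sub (c2 i hi)]; push_cast; ring
      · rw [hsupp i hi]; simp
    rw [this, Finset.sum_add_distrib, h1, ← Finset.mul_sum, h0]
    simpa using hnn
  push Not at c1 c2
  obtain ⟨i1, hi1, hi1'⟩ := c1
  obtain ⟨i2, hi2, hi2'⟩ := c2
  have hn : 0 < n := i1.pos
  have hb : b = (j - 1) * 2 ^ l / n := by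
    apply le_antisymm
    · rw [← hi2]; apply Nat.div_le_div_right; apply Nat.mul_le_mul_right; omega
    · rw [← hi1]; apply Nat.div_le_div_right; apply Nat.mul_le_mul_right; omega
  rw [if_pos hb]
  set s := n / 2 ^ l with hs
  have hblock : ∀ i : Fin n, (i : ℕ) * 2 ^ l / n = b → (i : ℕ) + 1 - j ≤ s := by
    intro i hi
    rw [hs, Nat.le_div_iff_mul_le (by positivity)]
    by_cases h : (i : ℕ) + 1 ≤ j
    · rw [Nat.sub_eq_zero_of_le h]; simp
    have e1 : (i : ℕ) * 2 ^ l < (b + 1) * n := by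
      rw [← hi]; exact Nat.lt_mul_of_div_lt (by omega) hn
    have e2 : b * n ≤ (i2 : ℕ) * 2 ^ l := by rw [← hi2]; exact Nat.div_mul_le_self _ _
    have e3 : ((i : ℕ) + 1 - j) + i2 ≤ i := by omega
    have e4 := Nat.mul_le_mul_right (2 ^ l) e3
    rw [add_mul] at e4
    rw [add_mul] at e1
    omega
  have hsR : (s : ℝ) ≤ n / 2 ^ l := by
    have := @Nat.cast_div_le ℝ _ _ _ n (2 ^ l)
    simpa using this
  set B := Finset.univ.filter (fun i : Fin n => (i : ℕ) * 2 ^ l / n = b ∧ j ≤ (i : ℕ)) with hB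
  have hcard : B.card ≤ s := by
    have : B.card ≤ (Finset.Ico j (j + s)).card := by
      apply Finset.card_le_card_of_injOn (fun i : Fin n => (i : ℕ))
      · intro i hi
        have hi' := (Finset.mem_filter.mp hi).2
        have := hblock i hi'.1
        simp only [Finset.coe_Ico, Set.mem_Ico]
        omega
      · intro a _ b _ h; exact Fin.ext h
    simpa using this
  have hsum : ∑ i : Fin n, v i * atm j i = ∑ i ∈ B, v i * atm j i := by
    symm
    apply Finset.sum_subset (Finset.subset_univ _)
    intro i _ hi
    by_cases h : (i : ℕ) * 2 ^ l / n = b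
    · have : (i : ℕ) + 1 ≤ j := by
        by_contra h3; exact hi (Finset.mem_filter.mpr ⟨Finset.mem_univ _, h, by omega⟩)
      rw [hatm, Nat.sub_eq_zero_of_le this]; simp
    · rw [hsupp i h]; simp
  rw [hsum]
  apply abs_le_of_sq_le_sq _ (by have := qq_pos; positivity)
  have hcs := Finset.sum_mul_sq_le_sq_mul_sq B v (fun i => atm j i)
  have hv' : ∑ i ∈ B, v i ^ 2 ≤ 1 :=
    (Finset.sum_le_sum_of_subset_of_nonneg (Finset.subset_univ _) (fun _ _ _ => sq_nonneg _)).trans hv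
  have ha : ∑ i ∈ B, atm j i ^ 2 ≤ (s : ℝ) ^ 3 := by
    have : ∑ i ∈ B, atm j i ^ 2 ≤ B.card • (s : ℝ) ^ 2 := by
      apply Finset.sum_le_card_nsmul
      intro i hi
      rw [hatm]
      have := hblock i (Finset.mem_filter.mp hi).2.1
      gcongr
    refine this.trans ?_
    rw [nsmul_eq_mul]
    have : (B.card : ℝ) ≤ s := by exact_mod_cast hcard
    nlinarith [sq_nonneg (s : ℝ)]
  calc (∑ i ∈ B, v i * atm j i) ^ 2 ≤ (∑ i ∈ B, v i ^ 2) * ∑ i ∈ B, atm j i ^ 2 := hcs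
    _ ≤ 1 * (s : ℝ) ^ 3 := by
      apply mul_le_mul hv' ha (Finset.sum_nonneg fun _ _ => sq_nonneg _) (by norm_num)
    _ ≤ ((n : ℝ) / 2 ^ l) ^ 3 := by rw [one_mul]; gcongr
    _ = (n * Real.sqrt n * qq ^ l) ^ 2 := by
      rw [mul_pow, mul_pow, Real.sq_sqrt (by positivity), ← pow_mul, mul_comm l 2, pow_mul, qq_sq,
        div_pow, ← pow_mul, mul_comm l 3, pow_mul, one_div, inv_pow]
      norm_num
      field_simp

/-- Normalised one-dimensional atoms. -/
noncomputable def natm (n j i : ℕ) : ℝ := atm j i / (if j = 0 then 1 else (n : ℝ))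

lemma natm_abs_le {n j i : ℕ} (hi : i < n) : |natm n j i| ≤ 1 := by
  unfold natm atm
  split_ifs with h
  · simp
  · have : (0 : ℝ) < n := by exact_mod_cast (by omega)
    rw [abs_of_nonneg (by positivity), div_le_one this]
    exact_mod_cast (by omega)

lemma inner_E {n : ℕ} (x y : EuclideanSpace ℝ (Fin n)) : inner ℝ x y = ∑ i, x i * y i := by
  rw [PiLp.inner_apply]
  exact Finset.sum_congr rfl fun i _ => by simp [mul_comm]

lemma norm_E {n : ℕ} {x : EuclideanSpace ℝ (Fin n)} (h : ‖x‖ ≤ 1) : ∑ i, x i ^ 2 ≤ 1 := by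
  have h2 : ‖x‖ ^ 2 ≤ 1 := by have := norm_nonneg x; nlinarith
  rw [EuclideanSpace.norm_sq_eq] at h2
  simpa using h2

lemma detail_vec {n l b : ℕ} {v : EuclideanSpace ℝ (Fin n)} (hQ : QB n l b v = v) :
    (∀ i : Fin n, (i : ℕ) * 2 ^ l / n ≠ b → v i = 0) ∧ ∑ i, v i = 0 ∧
      ∑ i : Fin n, v i * (i : ℝ) = 0 := by
  have hsupp : ∀ i : Fin n, (i : ℕ) * 2 ^ l / n ≠ b → v i = 0 := by
    intro i hi
    have h1 := QB_mem n l b v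
    rw [hQ] at h1
    obtain ⟨y, hy, z, hz, rfl⟩ := Submodule.mem_sup.mp h1
    have hk : (i : ℕ) * 2 ^ l / n = ((i : ℕ) * 2 ^ (l + 1) / n) / 2 := by
      rw [Nat.div_div_eq_div_mul, pow_succ, ← mul_assoc, Nat.mul_div_mul_right _ _ (by norm_num)]
    rw [PiLp.add_apply, SB_supp hy i (by omega), SB_supp hz i (by omega), add_zero]
  have hP : ∀ w ∈ SB n l b, inner ℝ v w = 0 := by
    intro w hw
    rw [← PB_of_mem hw, ← PB_symm, ← hQ, PB_QB, inner_zero_left]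
  have hf : ∀ f : ℕ → ℝ, blk n l b f ∈ SB n l b → ∑ i : Fin n, v i * f i = 0 := by
    intro f hf
    rw [← hP _ hf, inner_E]
    refine Finset.sum_congr rfl fun i _ => ?_
    by_cases hi : (i : ℕ) * 2 ^ l / n = b
    · simp [blk, hi]
    · rw [hsupp i hi]; simp
  refine ⟨hsupp, ?_, ?_⟩
  · have := hf (fun _ => 1) (Submodule.subset_span (by simp))
    simpa using this
  · exact hf (fun i => (i : ℝ)) (Submodule.subset_span (by simp))

lemma frame1 (n : ℕ) (hn : 2 ≤ n) : ∃ (ι : Type) (_ : Fintype ι) (e : ι → Fin n → ℝ) (lev : ι → ℕ),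
    (∀ i i', ∑ p, e p i * e p i' = if i = i' then 1 else 0) ∧
    (∀ p, ∑ i, e p i ^ 2 ≤ 1) ∧
    (∀ l, ∑ p, (if lev p = l then (1 : ℝ) else 0) ≤ 8 * 2 ^ l) ∧
    (∀ p, 1 ≤ lev p → ∀ j, j ≤ 1 → ∑ i : Fin n, e p i * natm n j i = 0) ∧
    (∀ j l, ∑ p, (if lev p = l then |∑ i : Fin n, e p i * natm n j i| else 0) ≤
      8 * Real.sqrt n * qq ^ l) := by
  classical
  obtain ⟨v0, hv0, -, hv0n⟩ := frame_of_proj (PB n 0 0) (PB_symm n 0 0)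
    (fun x => PB_of_mem (PB_mem _ _ _ _)) (by
      have : LinearMap.range (PB n 0 0) ≤ SB n 0 0 := by rintro _ ⟨x, rfl⟩; exact PB_mem _ _ _ _
      have h1 := Submodule.finrank_mono this
      have h2 := SB_finrank n 0 0
      omega)
  choose v hv hQv hvn using fun l b => frame_of_proj (QB n l b) (QB_symm n l b) (QB_idem n l b)
    (QB_rank n l b)
  let ι := Fin 4 ⊕ (Σ l : Fin n, Fin (2 ^ (l : ℕ)) × Fin 4)
  let e : ι → Fin n → ℝ := Sum.elim (fun r i => v0 r i) (fun p i => v p.1 p.2.1 p.2.2 i)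
  let lev : ι → ℕ := Sum.elim (fun _ => 0) (fun p => p.1)
  have hsum : ∀ g : ι → ℝ, ∑ p, g p = ∑ r, g (Sum.inl r) +
      ∑ l : Fin n, ∑ b : Fin (2 ^ (l : ℕ)), ∑ r, g (Sum.inr ⟨l, b, r⟩) := by
    intro g
    rw [Fintype.sum_sum_type, Fintype.sum_sigma]
    simp_rw [Fintype.sum_prod_type]
  have hlevsum : ∀ (l0 : ℕ) (g : ι → ℝ) (A B : ℝ), (0 ≤ A) → (0 ≤ B) → (∑ r, g (Sum.inl r) ≤ A) →
      (∀ l : Fin n, (l : ℕ) = l0 → ∑ b : Fin (2 ^ (l : ℕ)), ∑ r, g (Sum.inr ⟨l, b, r⟩) ≤ B) →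
      ∑ p, (if lev p = l0 then g p else 0) ≤ (if l0 = 0 then A else 0) + B := by
    intro l0 g A B hA hB h1 h2
    rw [hsum]
    apply add_le_add
    · by_cases h : l0 = 0
      · subst h; simpa [lev] using h1
      · simp [lev, h, Ne.symm h]
    · simp only [lev, Sum.elim_inr]
      by_cases h : l0 < n
      · rw [Finset.sum_eq_single (⟨l0, h⟩ : Fin n)]
        · simpa using h2 ⟨l0, h⟩ rfl
        · intro l _ hl
          have : (l : ℕ) ≠ l0 := fun h' => hl (Fin.ext h')
          simp [this]
        · simp
      · rw [Finset.sum_eq_zero]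
        · exact hB
        · intro l _
          have : (l : ℕ) ≠ l0 := by omega
          simp [this]
  have hnorm : ∀ p, ∑ i, e p i ^ 2 ≤ 1 := by
    rintro (r | ⟨l, b, r⟩)
    · exact norm_E (hv0n r)
    · exact norm_E (hvn l b r)
  have hdet : ∀ (l b : ℕ) (r : Fin 4) (j : ℕ), |∑ i : Fin n, v l b r i * natm n j i| ≤
      if b = (j - 1) * 2 ^ l / n then Real.sqrt n * qq ^ l else 0 := by
    intro l b r j
    obtain ⟨a1, a2, a3⟩ := detail_vec (hQv l b r)
    by_cases hj : j = 0
    · subst hj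
      have : ∑ i : Fin n, v l b r i * natm n 0 i = 0 := by simpa [natm, atm] using a2
      rw [this, abs_zero]
      have := qq_pos
      split_ifs <;> positivity
    have h := detail_atm (fun i => v l b r i) a1 a2 a3 (norm_E (hvn l b r)) j
    have hnpos : (0 : ℝ) < n := by exact_mod_cast (by omega)
    have : ∑ i : Fin n, v l b r i * natm n j i = (∑ i : Fin n, v l b r i * atm j i) / n := by
      rw [Finset.sum_div]
      refine Finset.sum_congr rfl fun i _ => ?_
      simp [natm, hj, mul_div_assoc]
    rw [this, abs_div, abs_of_pos hnpos, div_le_iff₀ hnpos]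
    refine h.trans (le_of_eq ?_)
    split_ifs <;> ring
  refine ⟨ι, inferInstance, e, lev, ?_, hnorm, ?_, ?_, ?_⟩
  · intro i i'
    have h1 := PB_full n n (Nat.lt_two_pow_self.le) (EuclideanSpace.single i (1 : ℝ))
    rw [PB_tele, hv0] at h1
    simp_rw [hv] at h1
    have h2 := congrArg (fun z : EuclideanSpace ℝ (Fin n) => z i') h1
    rw [hsum]
    simp only [PiLp.add_apply, WithLp.ofLp_sum, WithLp.ofLp_smul, Finset.sum_apply, Pi.smul_apply, smul_eq_mul] at h2
    simp only [e, Sum.elim_inl, Sum.elim_inr]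
    have hin : ∀ w : EuclideanSpace ℝ (Fin n), inner ℝ w (EuclideanSpace.single i (1 : ℝ)) = w i := by
      intro w; rw [inner_E]; simp
    simp only [hin, Finset.sum_range] at h2
    rw [h2]
    simp [eq_comm]
  · intro l
    refine (hlevsum l (fun _ => 1) 4 (4 * 2 ^ l) (by norm_num) (by positivity) (by simp) ?_).trans ?_
    · rintro l' rfl; simp [mul_comm]
    · have : (1 : ℝ) ≤ 2 ^ l := one_le_pow₀ (by norm_num)
      split_ifs <;> linarith
  · rintro (r | ⟨l, b, r⟩) hp j hj
    · simp [lev] at hp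
    · obtain ⟨a1, a2, a3⟩ := detail_vec (hQv l b r)
      simp only [e, Sum.elim_inr]
      interval_cases j
      · simpa [natm, atm] using a2
      · have : ∀ i : Fin n, v l b r i * natm n 1 i = (v l b r i * (i : ℝ)) / n := by
          intro i; simp [natm, atm, mul_div_assoc]
        simp_rw [this]
        rw [← Finset.sum_div, a3, zero_div]
  · intro j l
    have hq := qq_pos
    refine (hlevsum l (fun p => |∑ i : Fin n, e p i * natm n j i|) (4 * Real.sqrt n)
      (4 * Real.sqrt n * qq ^ l) (by positivity) (by positivity) ?_ ?_).trans ?_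
    · have : ∀ r, |∑ i : Fin n, e (Sum.inl r) i * natm n j i| ≤ Real.sqrt n := by
        intro r
        apply Real.abs_le_sqrt
        refine (Finset.sum_mul_sq_le_sq_mul_sq _ _ _).trans ?_
        have h1 := hnorm (Sum.inl r)
        have h2 : ∑ i : Fin n, natm n j i ^ 2 ≤ n := by
          have : ∑ i : Fin n, natm n j i ^ 2 ≤ (Finset.univ : Finset (Fin n)).card • (1 : ℝ) := by
            apply Finset.sum_le_card_nsmul
            intro i _
            rw [sq_le_one_iff_abs_le_one]
            exact natm_abs_le i.2
          simpa using this
        calc _ ≤ 1 * (n : ℝ) := mul_le_mul h1 h2 (Finset.sum_nonneg fun _ _ => sq_nonneg _) (by norm_num)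
          _ = n := one_mul _
      refine (Finset.sum_le_sum fun r _ => this r).trans ?_
      simp
    · rintro l' rfl
      have : ∀ b : Fin (2 ^ (l' : ℕ)), ∑ r, |∑ i : Fin n, e (Sum.inr ⟨l', b, r⟩) i * natm n j i| ≤
          if (b : ℕ) = (j - 1) * 2 ^ (l' : ℕ) / n then 4 * Real.sqrt n * qq ^ (l' : ℕ) else 0 := by
        intro b
        refine (Finset.sum_le_sum fun r _ => hdet l' b r j).trans ?_
        split_ifs <;> simp [mul_assoc]
      refine (Finset.sum_le_sum fun b _ => this b).trans ?_
      by_cases h : (j - 1) * 2 ^ (l' : ℕ) / n < 2 ^ (l' : ℕ)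
      · rw [Finset.sum_eq_single (⟨_, h⟩ : Fin (2 ^ (l' : ℕ)))]
        · simp
        · intro b _ hb
          rw [if_neg]
          exact fun h' => hb (Fin.ext h')
        · simp
      · rw [Finset.sum_eq_zero]
        · positivity
        · intro b _
          rw [if_neg (by omega)]
    · have h0 : (0 : ℝ) ≤ Real.sqrt n := Real.sqrt_nonneg _
      split_ifs with h
      · subst h; simp; linarith
      · have : 0 ≤ Real.sqrt n * qq ^ l := by positivity
        nlinarith

lemma tens_sum {d : ℕ} {ι : Fin d → Type} [∀ k, Fintype (ι k)] (f : ∀ k, ι k → ℝ) :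
    ∑ i : (∀ k, ι k), ∏ k, f k (i k) = ∏ k, ∑ x, f k x := by
  classical
  have := Finset.prod_univ_sum (fun k : Fin d => (Finset.univ : Finset (ι k))) f
  rw [Fintype.piFinset_univ] at this
  exact this.symm

lemma card_simplex (d m : ℕ) (hd : 1 ≤ d) :
    ((Fintype.piFinset fun _ : Fin d => Finset.range (m + 1)).filter
      (fun l => ∑ k, l k = m)).card ≤ (m + 1) ^ (d - 1) := by
  classical
  obtain ⟨d, rfl⟩ : ∃ d', d = d' + 1 := ⟨d - 1, by omega⟩
  have : ((Fintype.piFinset fun _ : Fin d => Finset.range (m + 1))).card = (m + 1) ^ d := by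
    simp
  rw [Nat.add_sub_cancel, ← this]
  apply Finset.card_le_card_of_injOn (fun l => Fin.tail l)
  · intro l hl
    have hl' := (Finset.mem_filter.mp hl).1
    rw [Fintype.mem_piFinset] at hl'
    simp only [Finset.mem_coe, Fintype.mem_piFinset]
    intro k
    exact hl' k.succ
  · intro a ha b hb hab
    have ha' := (Finset.mem_filter.mp ha).2
    have hb' := (Finset.mem_filter.mp hb).2
    rw [Fin.sum_univ_succ] at ha' hb'
    have ht : ∀ k : Fin d, a k.succ = b k.succ := fun k => congrFun hab k
    simp_rw [ht] at ha'
    funext k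
    refine Fin.cases ?_ ht k
    omega

lemma level_sum {d : ℕ} (hd : 1 ≤ d) {ι : Fin d → Type} [∀ k, Fintype (ι k)]
    (lev : ∀ k, ι k → ℕ) (g : ∀ k, ι k → ℝ) (hg : ∀ k p, 0 ≤ g k p) (a : Fin d → ℝ) (r : ℝ)
    (h : ∀ k l, ∑ p, (if lev k p = l then g k p else 0) ≤ a k * r ^ l) (m : ℕ)
    (ha : ∀ k, 0 ≤ a k) (hr : 0 ≤ r) :
    ∑ p : (∀ k, ι k), (if ∑ k, lev k (p k) = m then ∏ k, g k (p k) else 0) ≤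
      (∏ k, a k) * ((m : ℝ) + 1) ^ (d - 1) * r ^ m := by
  classical
  set T := (Fintype.piFinset fun _ : Fin d => Finset.range (m + 1)).filter
      (fun l => ∑ k, l k = m) with hT
  have h1 : ∀ p : (∀ k, ι k), (if ∑ k, lev k (p k) = m then ∏ k, g k (p k) else 0) =
      ∑ l ∈ T, ∏ k, (if lev k (p k) = l k then g k (p k) else 0) := by
    intro p
    have hz : ∀ l : Fin d → ℕ, l ≠ (fun k => lev k (p k)) →
        ∏ k, (if lev k (p k) = l k then g k (p k) else 0) = 0 := by
      intro l hl
      obtain ⟨k, hk⟩ := Function.ne_iff.mp hl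
      exact Finset.prod_eq_zero (Finset.mem_univ k) (by rw [if_neg (Ne.symm hk)])
    split_ifs with hm
    · rw [Finset.sum_eq_single (fun k => lev k (p k))]
      · simp
      · intro l _ hl; exact hz l hl
      · intro hnot
        exfalso; apply hnot
        rw [hT, Finset.mem_filter, Fintype.mem_piFinset]
        refine ⟨fun k => ?_, hm⟩
        rw [Finset.mem_range, Nat.lt_succ_iff, ← hm]
        exact Finset.single_le_sum (f := fun k => lev k (p k)) (fun _ _ => Nat.zero_le _) (Finset.mem_univ k)
    · rw [Finset.sum_eq_zero]
      intro l hl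
      apply hz
      rintro rfl
      exact hm (Finset.mem_filter.mp hl).2
  simp_rw [h1]
  rw [Finset.sum_comm]
  have h2 : ∀ l ∈ T, ∑ p : (∀ k, ι k), ∏ k, (if lev k (p k) = l k then g k (p k) else 0) ≤
      (∏ k, a k) * r ^ m := by
    intro l hl
    rw [tens_sum (fun k x => if lev k x = l k then g k x else 0)]
    calc _ ≤ ∏ k, (a k * r ^ (l k)) := by
          apply Finset.prod_le_prod
          · intro k _
            exact Finset.sum_nonneg fun p _ => by split_ifs; exacts [hg k p, le_rfl]
          · intro k _; exact h k (l k)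
      _ = _ := by
          rw [Finset.prod_mul_distrib, Finset.prod_pow_eq_pow_sum, (Finset.mem_filter.mp hl).2]
  refine (Finset.sum_le_card_nsmul _ _ _ h2).trans ?_
  rw [nsmul_eq_mul]
  have hc : (T.card : ℝ) ≤ ((m : ℝ) + 1) ^ (d - 1) := by exact_mod_cast card_simplex d m hd
  have hp : 0 ≤ (∏ k, a k) * r ^ m := mul_nonneg (Finset.prod_nonneg fun k _ => ha k) (by positivity)
  calc _ ≤ ((m : ℝ) + 1) ^ (d - 1) * ((∏ k, a k) * r ^ m) := mul_le_mul_of_nonneg_right hc hp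
    _ = _ := by ring

lemma frameD {d : ℕ} (hd : 1 ≤ d) (n : Fin d → ℕ) (hn : ∀ k, 2 ≤ n k) :
    ∃ (κ : Type) (_ : Fintype κ) (e : κ → (∀ k : Fin d, Fin (n k)) → ℝ) (lev : κ → ℕ),
    (∀ i i', ∑ p, e p i * e p i' = if i = i' then 1 else 0) ∧
    (∀ p, ∑ i, e p i ^ 2 ≤ 1) ∧
    (∀ m, ∑ p, (if lev p = m then (1 : ℝ) else 0) ≤ 8 ^ d * ((m : ℝ) + 1) ^ (d - 1) * 2 ^ m) ∧
    (∀ p, 1 ≤ lev p → ∀ j : (∀ k : Fin d, Fin (n k)), (∀ k, (j k : ℕ) ≤ 1) →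
      ∑ i, e p i * ∏ k, natm (n k) (j k) (i k) = 0) ∧
    (∀ (j : ∀ k : Fin d, Fin (n k)) (m : ℕ),
      ∑ p, (if lev p = m then |∑ i, e p i * ∏ k, natm (n k) (j k) (i k)| else 0) ≤
      8 ^ d * Real.sqrt (∏ k, (n k : ℝ)) * ((m : ℝ) + 1) ^ (d - 1) * qq ^ m) := by
  classical
  choose ι hι e lev h1 h2 h3 h4 h5 using fun k => frame1 (n k) (hn k)
  have htens : ∀ (p : ∀ k, ι k) (j : ∀ k : Fin d, Fin (n k)),
      ∑ i : (∀ k : Fin d, Fin (n k)), (∏ k, e k (p k) (i k)) * ∏ k, natm (n k) (j k) (i k) =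
      ∏ k, ∑ x : Fin (n k), e k (p k) x * natm (n k) (j k) x := by
    intro p j
    simp_rw [← Finset.prod_mul_distrib]
    exact tens_sum (fun k x => e k (p k) x * natm (n k) (j k) x)
  refine ⟨∀ k, ι k, inferInstance, fun p i => ∏ k, e k (p k) (i k), fun p => ∑ k, lev k (p k),
    ?_, ?_, ?_, ?_, ?_⟩
  · intro i i'
    simp_rw [← Finset.prod_mul_distrib]
    rw [tens_sum (fun k x => e k x (i k) * e k x (i' k))]
    simp_rw [h1]
    by_cases h : i = i'
    · simp [h]
    · rw [if_neg h]
      obtain ⟨k, hk⟩ := Function.ne_iff.mp h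
      exact Finset.prod_eq_zero (Finset.mem_univ k) (by simp [hk])
  · intro p
    simp_rw [← Finset.prod_pow]
    rw [tens_sum (fun k x => e k (p k) x ^ 2)]
    exact Finset.prod_le_one (fun k _ => Finset.sum_nonneg fun _ _ => sq_nonneg _) (fun k _ => h2 k _)
  · intro m
    have := level_sum hd lev (fun _ _ => 1) (fun _ _ => zero_le_one) (fun _ => 8) 2 h3 m
      (fun _ => by norm_num) (by norm_num)
    simpa using this
  · intro p hp j hj
    have : ∃ k, 1 ≤ lev k (p k) := by
      by_contra hcon
      push Not at hcon
      have : ∑ k, lev k (p k) = 0 := Finset.sum_eq_zero fun k _ => by have := hcon k; omega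
      have hp' : 1 ≤ ∑ k, lev k (p k) := hp
      omega
    obtain ⟨k, hk⟩ := this
    rw [htens]
    exact Finset.prod_eq_zero (Finset.mem_univ k) (h4 k (p k) hk (j k) (hj k))
  · intro j m
    have := level_sum hd lev (fun k p => |∑ x : Fin (n k), e k p x * natm (n k) (j k) x|)
      (fun _ _ => abs_nonneg _) (fun k => 8 * Real.sqrt (n k)) qq (fun k l => h5 k (j k) l) m
      (fun _ => by positivity) qq_pos.le
    simp_rw [htens, Finset.abs_prod]
    refine this.trans (le_of_eq ?_)
    congr 2
    rw [Finset.prod_mul_distrib]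
    congr 1
    · simp
    · rw [Real.sqrt_prod]
      intro k _; positivity

lemma det_bound {I κ : Type*} [Fintype I] [DecidableEq I] [Fintype κ] (e : κ → I → ℝ) (lev : κ → ℕ)
    (hpars : ∀ i i', ∑ p, e p i * e p i' = if i = i' then 1 else 0)
    (A : I → I → ℝ) (c : I → ℝ) (good : I → Prop) [DecidablePred good] (x y : I → ℝ)
    (hy : ∀ i, y i = ∑ j, c j * A j i)
    (hkill : ∀ p, 1 ≤ lev p → ∀ j, ¬ good j → ∑ i, e p i * A j i = 0) (W : ℝ)
    (hW : ∑ j with good j, |c j| ≤ W) (B : ℕ → ℝ)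
    (hB : ∀ j m, ∑ p, (if lev p = m then |∑ i, e p i * A j i| else 0) ≤ B m) (M : ℕ → ℝ)
    (hM0 : ∀ m, 0 ≤ M m) (hB0 : ∀ m, 0 ≤ B m) (hM : ∀ p, |∑ i, x i * e p i| ≤ M (lev p)) (L Mx : ℕ)
    (hMx : ∀ p, lev p < Mx) (hbasic : ∑ i, y i ^ 2 ≤ 2 * ∑ i, x i * y i) :
    ∑ i, y i ^ 2 ≤ 4 * ∑ p, (if lev p ≤ L then (∑ i, x i * e p i) ^ 2 else 0) +
      4 * (W * ∑ m ∈ Finset.Ico (L + 1) Mx, M m * B m) := by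
  set X : κ → ℝ := fun p => ∑ i, x i * e p i with hX
  set Y : κ → ℝ := fun p => ∑ i, y i * e p i with hY
  set α : κ → I → ℝ := fun p j => ∑ i, e p i * A j i with hα
  have pars : ∀ u v : I → ℝ, ∑ i, u i * v i = ∑ p, (∑ i, u i * e p i) * (∑ i, v i * e p i) := by
    intro u v
    simp_rw [Finset.sum_mul_sum]
    rw [Finset.sum_comm]
    refine Finset.sum_congr rfl fun i _ => ?_
    rw [Finset.sum_comm]
    have : ∀ i', ∑ p, u i * e p i * (v i' * e p i') = u i * v i' * (if i = i' then 1 else 0) := by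
      intro i'
      rw [← hpars, Finset.mul_sum]
      exact Finset.sum_congr rfl fun p _ => by ring
    simp_rw [this]
    simp
  have hxy : ∑ i, x i * y i = ∑ p, X p * Y p := pars x y
  have hyy : ∑ i, y i ^ 2 = ∑ p, Y p ^ 2 := by
    simp_rw [pow_two]; exact pars y y
  have hYexp : ∀ p, Y p = ∑ j, c j * α p j := by
    intro p
    simp only [hY, hα, hy, Finset.sum_mul, Finset.mul_sum]
    rw [Finset.sum_comm]
    refine Finset.sum_congr rfl fun j _ => Finset.sum_congr rfl fun i _ => by ring
  have hYabs : ∀ p, 1 ≤ lev p → |Y p| ≤ ∑ j with good j, |c j| * |α p j| := by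
    intro p hp
    have : Y p = ∑ j with good j, c j * α p j := by
      rw [hYexp]
      symm
      apply Finset.sum_subset (Finset.subset_univ _)
      intro j _ hj
      have : ¬ good j := fun h => hj (by simp [h])
      rw [show α p j = 0 from hkill p hp j this, mul_zero]
    rw [this]
    refine (Finset.abs_sum_le_sum_abs _ _).trans (le_of_eq ?_)
    exact Finset.sum_congr rfl fun j _ => abs_mul _ _
  have hpt : ∀ p, X p * Y p ≤ (if lev p ≤ L then X p ^ 2 else 0) + Y p ^ 2 / 4 +
      ∑ j with good j, |c j| * ∑ m ∈ Finset.Ico (L + 1) Mx, M m * (if lev p = m then |α p j| else 0) := by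
    intro p
    have hnn : 0 ≤ ∑ j with good j, |c j| * ∑ m ∈ Finset.Ico (L + 1) Mx, M m * (if lev p = m then |α p j| else 0) := by
      refine Finset.sum_nonneg fun j _ => mul_nonneg (abs_nonneg _) (Finset.sum_nonneg fun m _ => mul_nonneg (hM0 m) ?_)
      split_ifs
      exacts [abs_nonneg _, le_rfl]
    by_cases h : lev p ≤ L
    · rw [if_pos h]
      nlinarith [sq_nonneg (X p - Y p / 2)]
    · rw [if_neg h]
      have h1 : X p * Y p ≤ M (lev p) * ∑ j with good j, |c j| * |α p j| := by
        calc X p * Y p ≤ |X p| * |Y p| := by rw [← abs_mul]; exact le_abs_self _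
          _ ≤ _ := mul_le_mul (hM p) (hYabs p (by omega)) (abs_nonneg _) (hM0 _)
      have h2 : M (lev p) * ∑ j with good j, |c j| * |α p j| = ∑ j with good j, |c j| * ∑ m ∈ Finset.Ico (L + 1) Mx, M m * (if lev p = m then |α p j| else 0) := by
        rw [Finset.mul_sum]
        refine Finset.sum_congr rfl fun j _ => ?_
        rw [Finset.sum_eq_single (lev p)]
        · simp; ring
        · intro b _ hb; rw [if_neg (Ne.symm hb), mul_zero]
        · intro hnot; exfalso; apply hnot
          have := hMx p
          rw [Finset.mem_Ico]; omega
      nlinarith [sq_nonneg (Y p)]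
  have hhigh : ∑ p, ∑ j with good j, |c j| * ∑ m ∈ Finset.Ico (L + 1) Mx, M m * (if lev p = m then |α p j| else 0) ≤
      W * ∑ m ∈ Finset.Ico (L + 1) Mx, M m * B m := by
    rw [Finset.sum_comm]
    have h0 : 0 ≤ ∑ m ∈ Finset.Ico (L + 1) Mx, M m * B m :=
      Finset.sum_nonneg fun m _ => mul_nonneg (hM0 m) (hB0 m)
    refine le_trans ?_ (mul_le_mul_of_nonneg_right hW h0)
    rw [Finset.sum_mul]
    refine Finset.sum_le_sum fun j _ => ?_
    rw [← Finset.mul_sum]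
    refine mul_le_mul_of_nonneg_left ?_ (abs_nonneg _)
    rw [Finset.sum_comm]
    refine Finset.sum_le_sum fun m _ => ?_
    rw [← Finset.mul_sum]
    exact mul_le_mul_of_nonneg_left (hB j m) (hM0 m)
  have htot := Finset.sum_le_sum fun p (_ : p ∈ (Finset.univ : Finset κ)) => hpt p
  rw [Finset.sum_add_distrib, Finset.sum_add_distrib, ← Finset.sum_div, ← hyy, ← hxy] at htot
  linarith

lemma gaussPi_eq (d : ℕ) (n : Fin d → ℕ) (σ : ℝ) : ∃ v : NNReal, (v : ℝ) = σ ^ 2 ∧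
    gaussPi d n σ = Measure.pi (fun _ => ProbabilityTheory.gaussianReal 0 v) :=
  ⟨⟨σ ^ 2, sq_nonneg σ⟩, rfl, rfl⟩

instance gaussPi_prob (d : ℕ) (n : Fin d → ℕ) (σ : ℝ) : IsProbabilityMeasure (gaussPi d n σ) := by
  obtain ⟨v, hv, h⟩ := gaussPi_eq d n σ
  rw [h]; infer_instance

lemma mgfI (d : ℕ) (n : Fin d → ℕ) (σ t : ℝ) (g : (∀ k : Fin d, Fin (n k)) → ℝ)
    (hg : ∑ i, g i ^ 2 ≤ 1) :
    Integrable (fun ξ => Real.exp (t * ∑ i, ξ i * g i)) (gaussPi d n σ) ∧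
      ∫ ξ, Real.exp (t * ∑ i, ξ i * g i) ∂(gaussPi d n σ) ≤ Real.exp (σ ^ 2 * t ^ 2 / 2) := by
  have h0 : ∀ ξ : (∀ k : Fin d, Fin (n k)) → ℝ, Real.exp (t * ∑ i, ξ i * g i) =
      ∏ i, Real.exp ((t * g i) * ξ i) := by
    intro ξ
    rw [← Real.exp_sum, Finset.mul_sum]
    congr 1
    exact Finset.sum_congr rfl fun i _ => by ring
  simp_rw [h0]
  obtain ⟨v, hv, h⟩ := gaussPi_eq d n σ
  rw [h]
  constructor
  · exact Integrable.fintype_prod (f := fun i x => Real.exp ((t * g i) * x))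
      (fun i => ProbabilityTheory.integrable_exp_mul_gaussianReal _)
  · rw [integral_fintype_prod_eq_prod (f := fun i x => Real.exp ((t * g i) * x))]
    have : ∀ s : ℝ, ∫ x, Real.exp (s * x) ∂(ProbabilityTheory.gaussianReal 0 v) =
        Real.exp (σ ^ 2 * s ^ 2 / 2) := by
      intro s
      have := congrFun (ProbabilityTheory.mgf_fun_id_gaussianReal (μ := 0) (v := v)) s
      rw [ProbabilityTheory.mgf] at this
      rw [this]
      simp [hv]
    simp_rw [this]
    rw [← Real.exp_sum, Real.exp_le_exp]
    have : ∑ i, σ ^ 2 * (t * g i) ^ 2 / 2 = σ ^ 2 * t ^ 2 / 2 * ∑ i, g i ^ 2 := by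
      rw [Finset.mul_sum]; exact Finset.sum_congr rfl fun i _ => by ring
    rw [this]
    exact mul_le_of_le_one_right (by positivity) hg

lemma logc_bound (d m : ℕ) (hd : 1 ≤ d) :
    0 ≤ Real.log (2 * (8 ^ d * ((m : ℝ) + 1) ^ (d - 1) * 2 ^ m) * Real.exp (((m : ℝ) + 1) / 2)) ∧
    Real.log (2 * (8 ^ d * ((m : ℝ) + 1) ^ (d - 1) * 2 ^ m) * Real.exp (((m : ℝ) + 1) / 2)) + 1 ≤
      7 * d * ((m : ℝ) + 1) := by
  have hm : (0 : ℝ) ≤ m := Nat.cast_nonneg m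
  constructor
  · apply Real.log_nonneg
    have a1 : (1 : ℝ) ≤ 8 ^ d := one_le_pow₀ (by norm_num)
    have a2 : (1 : ℝ) ≤ ((m : ℝ) + 1) ^ (d - 1) := one_le_pow₀ (by linarith)
    have a3 : (1 : ℝ) ≤ 2 ^ m := one_le_pow₀ (by norm_num)
    have a4 : (1 : ℝ) ≤ Real.exp (((m : ℝ) + 1) / 2) := Real.one_le_exp (by positivity)
    have a5 : (1 : ℝ) ≤ 8 ^ d * ((m : ℝ) + 1) ^ (d - 1) * 2 ^ m :=
      one_le_mul_of_one_le_of_one_le (one_le_mul_of_one_le_of_one_le a1 a2) a3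
    exact one_le_mul_of_one_le_of_one_le (by linarith) a4
  · have hm1 : (0 : ℝ) < (m : ℝ) + 1 := by linarith
    rw [Real.log_mul (by positivity) (by positivity), Real.log_mul (by positivity) (by positivity),
      Real.log_mul (by positivity) (by positivity), Real.log_mul (by positivity) (by positivity),
      Real.log_exp, Real.log_pow, Real.log_pow, Real.log_pow]
    have l2 : Real.log 2 ≤ 1 := by have := Real.log_two_lt_d9; linarith
    have l8 : Real.log 8 ≤ 3 := by
      rw [show (8 : ℝ) = 2 ^ 3 by norm_num, Real.log_pow]; push_cast; linarith
    have lm : Real.log ((m : ℝ) + 1) ≤ m := by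
      have := Real.log_le_sub_one_of_pos hm1; linarith
    obtain ⟨d, rfl⟩ : ∃ d', d = d' + 1 := ⟨d - 1, by omega⟩
    rw [Nat.add_sub_cancel]
    push_cast
    have hd0 : (0 : ℝ) ≤ d := Nat.cast_nonneg d
    have b1 : ((d : ℝ) + 1) * Real.log 8 ≤ (d + 1) * 3 := by gcongr
    have b2 : (d : ℝ) * Real.log ((m : ℝ) + 1) ≤ d * m := by gcongr
    have b3 : (m : ℝ) * Real.log 2 ≤ m * 1 := by gcongr
    nlinarith [mul_nonneg hd0 hm]

lemma risk1 {d : ℕ} (hd : 1 ≤ d) (n : Fin d → ℕ) (hn : ∀ k, 2 ≤ n k) (σ V : ℝ) (hσ : 0 < σ)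
    (hV : 0 < V) (θstar : (∀ k : Fin d, Fin (n k)) → ℝ) (hstar : θstar ∈ Cset d n V)
    (θhat : ((∀ k : Fin d, Fin (n k)) → ℝ) → (∀ k : Fin d, Fin (n k)) → ℝ)
    (hproj : ∀ y, θhat y ∈ Cset d n V ∧
          ∀ θ ∈ Cset d n V,
            Real.sqrt (∑ i, (y i - θhat y i) ^ 2) ≤
              Real.sqrt (∑ i, (y i - θ i) ^ 2)) (L : ℕ) :
    ∃ Mx : ℕ, ∀ a : ℝ, 0 ≤ a →
      ∫⁻ ξ, ENNReal.ofReal (a * ∑ i, (θhat (θstar + ξ) i - θstar i) ^ 2) ∂(gaussPi d n σ) ≤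
      ENNReal.ofReal (a * (32 * σ ^ 2 *
          (∑ m ∈ Finset.range (L + 1), 8 ^ d * ((m : ℝ) + 1) ^ (d - 1) * 2 ^ m) +
        8 * V * ∑ m ∈ Finset.Ico (L + 1) Mx, (7 * d * σ * Real.sqrt ((m : ℝ) + 1)) *
          (8 ^ d * Real.sqrt (∏ k, (n k : ℝ)) * ((m : ℝ) + 1) ^ (d - 1) * qq ^ m))) := by
  classical
  obtain ⟨κ, hκ, e, lev, h1, h2, h3, h4, h5⟩ := frameD hd n hn
  set Mx := (∑ p, lev p) + 1 with hMx
  refine ⟨Mx, fun a ha => ?_⟩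
  set μ := gaussPi d n σ with hμ
  set Z : κ → ((∀ k : Fin d, Fin (n k)) → ℝ) → ℝ := fun p ξ => ∑ i, ξ i * e p i with hZ
  set F : ℝ → κ → ((∀ k : Fin d, Fin (n k)) → ℝ) → ℝ :=
    fun t p ξ => Real.exp (t * Z p ξ) + Real.exp (-t * Z p ξ) with hF
  have hFabs : ∀ t p ξ, Real.exp (|t * Z p ξ|) ≤ F t p ξ := by
    intro t p ξ
    simp only [hF, neg_mul]
    have e1 := Real.exp_pos (t * Z p ξ)
    have e2 := Real.exp_pos (-(t * Z p ξ))
    rcases abs_cases (t * Z p ξ) with ⟨h, _⟩ | ⟨h, _⟩ <;> rw [h] <;> linarith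
  have hFpos : ∀ t p ξ, 0 ≤ F t p ξ := fun t p ξ => (Real.exp_pos _).le.trans (hFabs t p ξ)
  have hFint : ∀ t p, Integrable (F t p) μ := fun t p =>
    (mgfI d n σ t (e p) (h2 p)).1.add (mgfI d n σ (-t) (e p) (h2 p)).1
  have hFle : ∀ t p, ∫ ξ, F t p ξ ∂μ ≤ 2 * Real.exp (σ ^ 2 * t ^ 2 / 2) := by
    intro t p
    have := integral_add (mgfI d n σ t (e p) (h2 p)).1 (mgfI d n σ (-t) (e p) (h2 p)).1
    have e1 := (mgfI d n σ t (e p) (h2 p)).2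
    have e2 := (mgfI d n σ (-t) (e p) (h2 p)).2
    rw [neg_sq] at e2
    simp only [hF]
    rw [this]
    linarith
  set lam : ℕ → ℝ := fun m => Real.sqrt ((m : ℝ) + 1) / σ with hlam
  have hlampos : ∀ m, 0 < lam m := fun m => by simp only [hlam]; positivity
  have hlamsq : ∀ m, σ ^ 2 * lam m ^ 2 / 2 = ((m : ℝ) + 1) / 2 := by
    intro m
    simp only [hlam]
    rw [div_pow, Real.sq_sqrt (by positivity)]; field_simp
  set N : ℕ → ℝ := fun m => 8 ^ d * ((m : ℝ) + 1) ^ (d - 1) * 2 ^ m with hN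
  have hNpos : ∀ m, 0 < N m := fun m => by simp only [hN]; positivity
  set c : ℕ → ℝ := fun m => 2 * N m * Real.exp (((m : ℝ) + 1) / 2) with hc
  have hcpos : ∀ m, 0 < c m := fun m => by have := hNpos m; simp only [hc]; positivity
  set S : ℕ → ((∀ k : Fin d, Fin (n k)) → ℝ) → ℝ :=
    fun m ξ => ∑ p, (if lev p = m then F (lam m) p ξ else 0) with hS
  have hSnn : ∀ m ξ, 0 ≤ S m ξ := fun m ξ => Finset.sum_nonneg fun p _ => by
    split_ifs; exacts [hFpos _ _ _, le_rfl]
  have hSterm : ∀ m p, Integrable (fun ξ => if lev p = m then F (lam m) p ξ else 0) μ := by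
    intro m p
    split_ifs
    · exact hFint _ _
    · exact integrable_const _
  have hSint : ∀ m, Integrable (S m) μ := fun m => integrable_finsetSum _ fun p _ => hSterm m p
  have hSle : ∀ m, ∫ ξ, S m ξ ∂μ ≤ c m := by
    intro m
    simp only [hS]
    rw [integral_finsetSum _ fun p _ => hSterm m p]
    calc _ ≤ ∑ p, (if lev p = m then (1 : ℝ) else 0) * (2 * Real.exp (((m : ℝ) + 1) / 2)) := by
          refine Finset.sum_le_sum fun p _ => ?_
          split_ifs
          · have := hFle (lam m) p
            rw [hlamsq] at this; linarith
          · simp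
      _ ≤ N m * (2 * Real.exp (((m : ℝ) + 1) / 2)) := by
          rw [← Finset.sum_mul]
          exact mul_le_mul_of_nonneg_right (h3 m) (by positivity)
      _ = c m := by simp only [hc]; ring
  set M : ℕ → ((∀ k : Fin d, Fin (n k)) → ℝ) → ℝ :=
    fun m ξ => (Real.log (c m) + S m ξ / c m) / lam m with hM
  have hlogc : ∀ m, 0 ≤ Real.log (c m) := fun m => (logc_bound d m hd).1
  have hlogc' : ∀ m, Real.log (c m) + 1 ≤ 7 * d * ((m : ℝ) + 1) := fun m => (logc_bound d m hd).2
  have hMnn : ∀ m ξ, 0 ≤ M m ξ := fun m ξ =>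
    div_nonneg (add_nonneg (hlogc m) (div_nonneg (hSnn m ξ) (hcpos m).le)) (hlampos m).le
  have hMint : ∀ m, Integrable (M m) μ := fun m =>
    ((integrable_const _).add ((hSint m).div_const _)).div_const _
  have hMle : ∀ m, ∫ ξ, M m ξ ∂μ ≤ 7 * d * σ * Real.sqrt ((m : ℝ) + 1) := by
    intro m
    simp only [hM]
    rw [integral_div, integral_add (integrable_const _) ((hSint m).div_const _), integral_div]
    simp only [integral_const, probReal_univ, one_smul]
    have e1 : (∫ ξ, S m ξ ∂μ) / c m ≤ 1 := (div_le_one (hcpos m)).mpr (hSle m)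
    rw [div_le_iff₀ (hlampos m)]
    have : 7 * d * σ * Real.sqrt ((m : ℝ) + 1) * lam m = 7 * d * ((m : ℝ) + 1) := by
      simp only [hlam]
      have := Real.mul_self_sqrt (show (0 : ℝ) ≤ (m : ℝ) + 1 by positivity)
      field_simp
      rw [pow_two, this]
    rw [this]
    linarith [hlogc' m]
  have hMZ : ∀ p ξ, |Z p ξ| ≤ M (lev p) ξ := by
    intro p ξ
    set m := lev p with hm
    simp only [hM]
    rw [le_div_iff₀ (hlampos m)]
    have e1 := Real.add_one_le_exp (|lam m * Z p ξ| - Real.log (c m))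
    rw [Real.exp_sub, Real.exp_log (hcpos m)] at e1
    have e2 : Real.exp (|lam m * Z p ξ|) / c m ≤ S m ξ / c m := by
      apply div_le_div_of_nonneg_right _ (hcpos m).le
      refine (hFabs _ _ _).trans ?_
      simp only [hS]
      have := Finset.single_le_sum (f := fun q => if lev q = m then F (lam m) q ξ else 0)
        (fun q _ => by split_ifs; exacts [hFpos _ _ _, le_rfl]) (Finset.mem_univ p)
      simpa [← hm] using this
    rw [abs_mul, abs_of_pos (hlampos m)] at e1 e2
    linarith
  set B : ℕ → ℝ := fun m => 8 ^ d * Real.sqrt (∏ k, (n k : ℝ)) * ((m : ℝ) + 1) ^ (d - 1) * qq ^ m with hB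
  have hBnn : ∀ m, 0 ≤ B m := fun m => by have := qq_pos; simp only [hB]; positivity
  set G1 : ((∀ k : Fin d, Fin (n k)) → ℝ) → ℝ :=
    fun ξ => ∑ p, (if lev p ≤ L then 2 * σ ^ 2 * F σ⁻¹ p ξ else 0) with hG1
  have hG1term : ∀ p, Integrable (fun ξ => if lev p ≤ L then 2 * σ ^ 2 * F σ⁻¹ p ξ else 0) μ := by
    intro p
    split_ifs
    · exact (hFint _ _).const_mul _
    · exact integrable_const _
  set G2 : ((∀ k : Fin d, Fin (n k)) → ℝ) → ℝ :=
    fun ξ => ∑ m ∈ Finset.Ico (L + 1) Mx, M m ξ * B m with hG2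
  have hG1int : Integrable G1 μ := integrable_finsetSum _ fun p _ => hG1term p
  have hG2int : Integrable G2 μ := integrable_finsetSum _ fun m _ => (hMint m).mul_const _
  have hG1le : ∫ ξ, G1 ξ ∂μ ≤ 8 * σ ^ 2 * ∑ m ∈ Finset.range (L + 1), N m := by
    simp only [hG1]
    rw [integral_finsetSum _ fun p _ => hG1term p]
    calc _ ≤ ∑ p, (if lev p ≤ L then (1 : ℝ) else 0) * (8 * σ ^ 2) := by
          refine Finset.sum_le_sum fun p _ => ?_
          split_ifs
          · rw [integral_const_mul]
            have e1 := hFle σ⁻¹ p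
            have e2 : σ ^ 2 * σ⁻¹ ^ 2 / 2 = 1 / 2 := by field_simp
            rw [e2] at e1
            have e3 : Real.exp (1 / 2) ≤ 2 := by
              have h := Real.exp_one_lt_d9
              have h' : Real.exp (1 / 2) * Real.exp (1 / 2) = Real.exp 1 := by
                rw [← Real.exp_add]; norm_num
              nlinarith [Real.exp_pos (1 / 2 : ℝ)]
            nlinarith [sq_nonneg σ]
          · simp
      _ = (∑ m ∈ Finset.range (L + 1), ∑ p, (if lev p = m then (1 : ℝ) else 0)) * (8 * σ ^ 2) := by
          rw [← Finset.sum_mul, Finset.sum_comm]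
          congr 1
          refine Finset.sum_congr rfl fun p _ => ?_
          simp
      _ ≤ (∑ m ∈ Finset.range (L + 1), N m) * (8 * σ ^ 2) := by
          apply mul_le_mul_of_nonneg_right _ (by positivity)
          exact Finset.sum_le_sum fun m _ => h3 m
      _ = _ := by ring
  have hG2le : ∫ ξ, G2 ξ ∂μ ≤ ∑ m ∈ Finset.Ico (L + 1) Mx, 7 * d * σ * Real.sqrt ((m : ℝ) + 1) * B m := by
    simp only [hG2]
    rw [integral_finsetSum _ fun m _ => (hMint m).mul_const _]
    refine Finset.sum_le_sum fun m _ => ?_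
    rw [integral_mul_const]
    exact mul_le_mul_of_nonneg_right (hMle m) (hBnn m)
  have hG1nn : ∀ ξ, 0 ≤ G1 ξ := fun ξ => Finset.sum_nonneg fun p _ => by
    split_ifs
    · have := hFpos σ⁻¹ p ξ; positivity
    · exact le_rfl
  have hG2nn : ∀ ξ, 0 ≤ G2 ξ := fun ξ => Finset.sum_nonneg fun m _ => mul_nonneg (hMnn m ξ) (hBnn m)
  have hpoint : ∀ ξ, ∑ i, (θhat (θstar + ξ) i - θstar i) ^ 2 ≤ 4 * G1 ξ + 8 * V * G2 ξ := by
    intro ξ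
    obtain ⟨hin, hmin⟩ := hproj (θstar + ξ)
    set Δ : (∀ k : Fin d, Fin (n k)) → ℝ := θhat (θstar + ξ) - θstar with hΔ
    have hWV : ∑ j : (∀ k : Fin d, Fin (n k)) with (∃ k, 2 ≤ (j k : ℕ)), |coefM Δ j * wgt j| ≤ 2 * V := by
      have e1 := V2_sub_le hn (θhat (θstar + ξ)) θstar
      rw [V2_eq hn] at e1
      have e2 : V2 d n (latExtend d n (θhat (θstar + ξ))) ≤ V := hin
      have e3 : V2 d n (latExtend d n θstar) ≤ V := hstar
      refine le_trans (le_of_eq ?_) (e1.trans (by linarith))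
      refine Finset.sum_congr rfl fun j _ => ?_
      rw [abs_mul, abs_of_nonneg (wgt_nonneg j), mul_comm]
    have hbasic : ∑ i, Δ i ^ 2 ≤ 2 * ∑ i, ξ i * Δ i := by
      have e1 := hmin θstar hstar
      rw [Real.sqrt_le_sqrt_iff (Finset.sum_nonneg fun _ _ => sq_nonneg _)] at e1
      have e2 : ∑ i, ((θstar + ξ) i - θhat (θstar + ξ) i) ^ 2 =
          ∑ i, ξ i ^ 2 - 2 * ∑ i, ξ i * Δ i + ∑ i, Δ i ^ 2 := by
        rw [Finset.mul_sum, ← Finset.sum_sub_distrib, ← Finset.sum_add_distrib]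
        refine Finset.sum_congr rfl fun i _ => ?_
        simp only [hΔ, Pi.add_apply, Pi.sub_apply]; ring
      have e3 : ∑ i, ((θstar + ξ) i - θstar i) ^ 2 = ∑ i, ξ i ^ 2 := by
        refine Finset.sum_congr rfl fun i _ => ?_
        simp
      rw [e2, e3] at e1
      linarith
    have hexp : ∀ i, Δ i = ∑ j, (coefM Δ j * wgt j) * ∏ k, natm (n k) (j k) (i k) := by
      intro i
      rw [theta_expand hn Δ i]
      refine Finset.sum_congr rfl fun j _ => ?_
      rw [mul_assoc]
      congr 1
      rw [wgt, ← Finset.prod_mul_distrib]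
      refine Finset.prod_congr rfl fun k _ => ?_
      unfold natm
      have : (n k : ℝ) ≠ 0 := by have := hn k; positivity
      split_ifs
      · simp
      · field_simp
    have := det_bound e lev h1 (fun j i => ∏ k, natm (n k) (j k) (i k)) (fun j => coefM Δ j * wgt j)
      (fun j => ∃ k, 2 ≤ (j k : ℕ)) ξ Δ hexp
      (fun p hp j hj => h4 p hp j (fun k => by
        by_contra hcon
        exact hj ⟨k, by omega⟩)) (2 * V) hWV B h5 (fun m => M m ξ) (fun m => hMnn m ξ) hBnn
      (fun p => hMZ p ξ) L Mx
      (fun p => Nat.lt_succ_of_le (Finset.single_le_sum (f := lev) (fun _ _ => Nat.zero_le _) (Finset.mem_univ p)))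
      hbasic
    refine this.trans ?_
    have hlow : ∑ p, (if lev p ≤ L then (∑ i, ξ i * e p i) ^ 2 else 0) ≤ G1 ξ := by
      refine Finset.sum_le_sum fun p _ => ?_
      split_ifs
      · have e1 := hFabs σ⁻¹ p ξ
        have e2 := Real.quadratic_le_exp_of_nonneg (abs_nonneg (σ⁻¹ * Z p ξ))
        rw [sq_abs, mul_pow] at e2
        have e3 := abs_nonneg (σ⁻¹ * Z p ξ)
        have e4 : σ⁻¹ ^ 2 * Z p ξ ^ 2 ≤ 2 * F σ⁻¹ p ξ := by linarith
        have e5 : Z p ξ ^ 2 = σ ^ 2 * (σ⁻¹ ^ 2 * Z p ξ ^ 2) := by field_simp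
        have e6 : (∑ i, ξ i * e p i) ^ 2 = Z p ξ ^ 2 := rfl
        rw [e6, e5]
        nlinarith [sq_nonneg σ]
      · exact le_rfl
    simp only [hG2]
    linarith
  calc _ ≤ ∫⁻ ξ, ENNReal.ofReal (a * (4 * G1 ξ + 8 * V * G2 ξ)) ∂μ :=
        lintegral_mono fun ξ => ENNReal.ofReal_le_ofReal (mul_le_mul_of_nonneg_left (hpoint ξ) ha)
    _ = ENNReal.ofReal (∫ ξ, a * (4 * G1 ξ + 8 * V * G2 ξ) ∂μ) := by
        rw [ofReal_integral_eq_lintegral_ofReal]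
        · exact ((hG1int.const_mul _).add (hG2int.const_mul _)).const_mul _
        · exact Filter.Eventually.of_forall fun ξ => by
            have := hG1nn ξ
            have := hG2nn ξ
            simp only [Pi.zero_apply]
            positivity
    _ ≤ _ := by
        apply ENNReal.ofReal_le_ofReal
        rw [integral_const_mul, integral_add (hG1int.const_mul _) (hG2int.const_mul _),
          integral_const_mul, integral_const_mul]
        apply mul_le_mul_of_nonneg_left _ ha
        have := mul_le_mul_of_nonneg_left hG2le (show 0 ≤ 8 * V by positivity)
        linarith

lemma low_sum (d L : ℕ) :
    (∑ m ∈ Finset.range (L + 1), 8 ^ d * ((m : ℝ) + 1) ^ (d - 1) * 2 ^ m) ≤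
      8 ^ d * ((L : ℝ) + 1) ^ (d - 1) * 2 ^ (L + 1) := by
  have h1 : (∑ m ∈ Finset.range (L + 1), 8 ^ d * ((m : ℝ) + 1) ^ (d - 1) * 2 ^ m) ≤
      ∑ m ∈ Finset.range (L + 1), 8 ^ d * ((L : ℝ) + 1) ^ (d - 1) * 2 ^ m := by
    refine Finset.sum_le_sum fun m hm => ?_
    have : (m : ℝ) ≤ L := by
      have := Finset.mem_range.mp hm
      exact_mod_cast (by omega : m ≤ L)
    gcongr
  refine h1.trans ?_
  rw [← Finset.mul_sum]
  have : ∑ m ∈ Finset.range (L + 1), (2 : ℝ) ^ m ≤ 2 ^ (L + 1) := by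
    rw [geom_sum_eq (by norm_num)]; norm_num
  gcongr

lemma high_sum (d : ℕ) (hd : 1 ≤ d) : ∃ G : ℝ, 0 ≤ G ∧ ∀ L Mx : ℕ,
    ∑ m ∈ Finset.Ico (L + 1) Mx, Real.sqrt ((m : ℝ) + 1) * (((m : ℝ) + 1) ^ (d - 1) * qq ^ m) ≤
      G * (Real.sqrt ((L : ℝ) + 1) * ((L : ℝ) + 1) ^ (d - 1) * qq ^ L) := by
  have hq := qq_pos
  have hq1 := qq_le
  have hs : Summable (fun j : ℕ => ((j : ℝ) + 1) ^ d * qq ^ j) := by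
    have h := summable_pow_mul_geometric_of_norm_lt_one (R := ℝ) d (r := qq)
      (by rw [Real.norm_eq_abs, abs_of_pos hq]; linarith)
    have h2 := ((summable_nat_add_iff 1).mpr h).mul_right qq⁻¹
    refine h2.congr fun j => ?_
    push_cast
    rw [pow_succ]
    field_simp
  refine ⟨∑' j : ℕ, ((j : ℝ) + 1) ^ d * qq ^ j, tsum_nonneg fun j => by positivity, fun L Mx => ?_⟩
  rw [Finset.sum_Ico_eq_sum_range]
  have hterm : ∀ j : ℕ, Real.sqrt (((L + 1 + j : ℕ) : ℝ) + 1) *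
      ((((L + 1 + j : ℕ) : ℝ) + 1) ^ (d - 1) * qq ^ (L + 1 + j)) ≤
      (((j + 1 : ℕ) : ℝ) + 1) ^ d * qq ^ (j + 1) *
        (Real.sqrt ((L : ℝ) + 1) * ((L : ℝ) + 1) ^ (d - 1) * qq ^ L) := by
    intro j
    have hL : (0 : ℝ) ≤ L := Nat.cast_nonneg L
    have hj : (0 : ℝ) ≤ j := Nat.cast_nonneg j
    have a1 : ((L + 1 + j : ℕ) : ℝ) + 1 ≤ ((L : ℝ) + 1) * (((j + 1 : ℕ) : ℝ) + 1) := by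
      push_cast; nlinarith
    have a2 : Real.sqrt (((L + 1 + j : ℕ) : ℝ) + 1) ≤ Real.sqrt ((L : ℝ) + 1) * (((j + 1 : ℕ) : ℝ) + 1) := by
      refine (Real.sqrt_le_sqrt a1).trans ?_
      rw [Real.sqrt_mul (by positivity)]
      gcongr
      rw [Real.sqrt_le_left (by positivity)]
      push_cast; nlinarith
    calc _ ≤ (Real.sqrt ((L : ℝ) + 1) * (((j + 1 : ℕ) : ℝ) + 1)) *
          ((((L : ℝ) + 1) * (((j + 1 : ℕ) : ℝ) + 1)) ^ (d - 1) * qq ^ (L + 1 + j)) := by gcongr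
      _ = _ := by
        obtain ⟨d, rfl⟩ : ∃ d', d = d' + 1 := ⟨d - 1, by omega⟩
        rw [Nat.add_sub_cancel, mul_pow]
        ring
  refine (Finset.sum_le_sum fun j _ => hterm j).trans ?_
  rw [← Finset.sum_mul]
  apply mul_le_mul_of_nonneg_right _ (by positivity)
  have h1 := Finset.sum_range_succ' (fun j : ℕ => ((j : ℝ) + 1) ^ d * qq ^ j) (Mx - (L + 1))
  have h2 := hs.sum_le_tsum (Finset.range (Mx - (L + 1) + 1)) (fun j _ => by positivity)
  rw [h1] at h2
  have h3 : (0 : ℝ) ≤ (((0 : ℕ) : ℝ) + 1) ^ d * qq ^ 0 := by positivity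
  linarith

lemma qq_pow (L : ℕ) : qq ^ L = ((2 : ℝ) ^ L) ^ (-(3 / 2) : ℝ) := by
  have h : qq = (2 : ℝ) ^ (-(3 / 2) : ℝ) := by
    have h1 := qq_sq
    have h2 : ((2 : ℝ) ^ (-(3 / 2) : ℝ)) ^ 2 = 1 / 8 := by
      rw [← Real.rpow_natCast, ← Real.rpow_mul (by norm_num)]
      rw [show (-(3 / 2) * ((2 : ℕ) : ℝ) : ℝ) = -((3 : ℕ) : ℝ) by norm_num,
        Real.rpow_neg (by norm_num), Real.rpow_natCast]
      norm_num
    have h3 : (0 : ℝ) < (2 : ℝ) ^ (-(3 / 2) : ℝ) := by positivity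
    have h4 := qq_pos
    exact (sq_eq_sq₀ h4.le h3.le).mp (h1.trans h2.symm)
  rw [h, ← Real.rpow_natCast, ← Real.rpow_natCast, ← Real.rpow_mul (by norm_num),
    ← Real.rpow_mul (by norm_num), mul_comm]

lemma choose_L (A : ℝ) (hA : 0 < A) : ∃ L : ℕ, (2 : ℝ) ^ L ≤ 2 * max 1 (A ^ (2 / 5 : ℝ)) ∧
    A * qq ^ L ≤ max 1 (A ^ (2 / 5 : ℝ)) ∧ (L : ℝ) + 1 ≤ 4 * Real.log (2 + A) := by
  have l2 := Real.log_two_gt_d9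
  have hl : Real.log 2 ≤ Real.log (2 + A) := Real.log_le_log (by norm_num) (by linarith)
  rcases lt_or_ge A 1 with h | h
  · refine ⟨0, ?_, ?_, ?_⟩
    · have := le_max_left 1 (A ^ (2 / 5 : ℝ))
      rw [pow_zero]; linarith
    · have := le_max_left 1 (A ^ (2 / 5 : ℝ))
      rw [pow_zero]; linarith
    · push_cast; linarith
  · have hX : 1 ≤ A ^ (2 / 5 : ℝ) := Real.one_le_rpow h (by norm_num)
    have hX0 : 0 < A ^ (2 / 5 : ℝ) := by linarith
    rw [max_eq_right hX]
    obtain ⟨L, hL1, hL2⟩ : ∃ L : ℕ, (2 : ℝ) ^ L ≤ 2 * A ^ (2 / 5 : ℝ) ∧ A ^ (2 / 5 : ℝ) ≤ 2 ^ L := by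
      obtain ⟨k, hk1, hk2⟩ := exists_nat_pow_near hX (show (1 : ℝ) < 2 by norm_num)
      refine ⟨k + 1, ?_, hk2.le⟩
      rw [pow_succ]; linarith
    refine ⟨L, hL1, ?_, ?_⟩
    · rw [qq_pow]
      have : ((2 : ℝ) ^ L) ^ (-(3 / 2) : ℝ) ≤ (A ^ (2 / 5 : ℝ)) ^ (-(3 / 2) : ℝ) :=
        Real.rpow_le_rpow_of_nonpos hX0 hL2 (by norm_num)
      calc _ ≤ A * (A ^ (2 / 5 : ℝ)) ^ (-(3 / 2) : ℝ) := by gcongr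
        _ = A ^ (2 / 5 : ℝ) := by
          rw [← Real.rpow_mul hA.le]
          nth_rewrite 1 [← Real.rpow_one A]
          rw [← Real.rpow_add hA]
          norm_num
    · have h1 := Real.log_le_log (by positivity) hL1
      rw [Real.log_pow, Real.log_mul (by norm_num) hX0.ne', Real.log_rpow hA] at h1
      have h2 : Real.log A ≤ Real.log (2 + A) := Real.log_le_log hA (by linarith)
      have h3 : 1 ≤ Real.log (2 + A) := by
        rw [Real.le_log_iff_exp_le (by linarith)]
        have := Real.exp_one_lt_d9; linarith
      have h4 : Real.log 2 < 0.6931471808 := Real.log_two_lt_d9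
      have hL0 : (0 : ℝ) ≤ L := Nat.cast_nonneg L
      nlinarith

lemma finalR (d : ℕ) (hd : 1 ≤ d) (N σ V : ℝ) (hN : 1 ≤ N) (hσ : 0 < σ) (hV : 0 < V)
    (K : ℝ) (hK : 0 ≤ K) (L : ℕ)
    (hL : (L : ℝ) + 1 ≤ 4 * Real.log (2 + V * N ^ ((1 : ℝ) / 2) / σ)) :
    N⁻¹ * (K * σ ^ 2 * max 1 ((V * N ^ ((1 : ℝ) / 2) / σ) ^ (2 / 5 : ℝ)) *
        (Real.sqrt ((L : ℝ) + 1) * ((L : ℝ) + 1) ^ (d - 1))) ≤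
      (K * 8 ^ d) * (σ ^ 2 * V ^ ((1 : ℝ) / 2) / N) ^ ((4 : ℝ) / 5) *
        Real.log (2 + V * N ^ ((1 : ℝ) / 2) / σ) ^ (3 * (2 * (d : ℝ) - 1) / 5) +
      (K * 8 ^ d) * (σ ^ 2 / N) *
        Real.log (2 + V * N ^ ((1 : ℝ) / 2) / σ) ^ (3 * (2 * (d : ℝ) - 1) / 4) := by
  have hN0 : 0 < N := by linarith
  have hfirst : (σ ^ 2 * V ^ ((1 : ℝ) / 2) / N) ^ ((4 : ℝ) / 5) =
      σ ^ 2 / N * (V * N ^ ((1 : ℝ) / 2) / σ) ^ (2 / 5 : ℝ) := by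
    rw [Real.div_rpow (by positivity) hN0.le, Real.mul_rpow (by positivity) (by positivity),
      Real.div_rpow (by positivity) hσ.le, Real.mul_rpow (by positivity) (by positivity),
      ← Real.rpow_mul hV.le, ← Real.rpow_mul hN0.le, ← Real.rpow_natCast, ← Real.rpow_mul hσ.le]
    have e1 : σ ^ (((2 : ℕ) : ℝ) * (4 / 5)) = σ ^ ((2 : ℕ) : ℝ) / σ ^ (2 / 5 : ℝ) := by
      rw [← Real.rpow_sub hσ]; norm_num
    have e2 : N ^ ((4 : ℝ) / 5) = N / N ^ ((1 : ℝ) / 2 * (2 / 5)) := by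
      nth_rewrite 2 [← Real.rpow_one N]
      rw [← Real.rpow_sub hN0]; norm_num
    rw [e1, e2, show (1 : ℝ) / 2 * (4 / 5) = 2 / 5 by norm_num]
    field_simp
  rw [hfirst]
  set A := V * N ^ ((1 : ℝ) / 2) / σ with hA
  have hA0 : 0 < A := by positivity
  set l := Real.log (2 + A) with hl
  have l2 := Real.log_two_gt_d9
  have hl2 : Real.log 2 ≤ l := Real.log_le_log (by norm_num) (by linarith)
  have hl0 : 0 < l := by linarith
  have hd1 : (1 : ℝ) ≤ d := by exact_mod_cast hd
  set p : ℝ := (d : ℝ) - 1 / 2 with hp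
  have hp0 : 0 ≤ p := by linarith
  have hT : Real.sqrt ((L : ℝ) + 1) * ((L : ℝ) + 1) ^ (d - 1) = ((L : ℝ) + 1) ^ p := by
    have : (0 : ℝ) < (L : ℝ) + 1 := by positivity
    rw [Real.sqrt_eq_rpow, ← Real.rpow_natCast, ← Real.rpow_add this]
    congr 1
    rw [Nat.cast_sub hd, hp]; push_cast; ring
  have hT2 : ((L : ℝ) + 1) ^ p ≤ 4 ^ d * l ^ p := by
    calc ((L : ℝ) + 1) ^ p ≤ (4 * l) ^ p := Real.rpow_le_rpow (by positivity) hL hp0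
      _ = 4 ^ p * l ^ p := Real.mul_rpow (by norm_num) hl0.le
      _ ≤ 4 ^ d * l ^ p := by
        gcongr
        rw [← Real.rpow_natCast]
        exact Real.rpow_le_rpow_of_exponent_le (by norm_num) (by linarith)
  rw [hT]
  have h48 : (4 : ℝ) ^ d ≤ 8 ^ d := by gcongr; norm_num
  have hq1 : 0 ≤ (K * 8 ^ d) * (σ ^ 2 / N * A ^ (2 / 5 : ℝ)) * l ^ (3 * (2 * (d : ℝ) - 1) / 5) := by positivity
  have hq2 : 0 ≤ (K * 8 ^ d) * (σ ^ 2 / N) * l ^ (3 * (2 * (d : ℝ) - 1) / 4) := by positivity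
  rcases lt_or_ge A 1 with h | h
  · have hX : A ^ (2 / 5 : ℝ) ≤ 1 := Real.rpow_le_one hA0.le h.le (by norm_num)
    rw [max_eq_left hX]
    have hlp : l ^ p ≤ 2 ^ d * l ^ (3 * (2 * (d : ℝ) - 1) / 4) := by
      set q := 3 * (2 * (d : ℝ) - 1) / 4 with hq
      have a1 : (2 * l) ^ p ≤ (2 * l) ^ q :=
        Real.rpow_le_rpow_of_exponent_le (by linarith) (by linarith)
      rw [Real.mul_rpow (by norm_num) hl0.le, Real.mul_rpow (by norm_num) hl0.le] at a1
      have a2 : (2 : ℝ) ^ q ≤ 2 ^ p * 2 ^ d := by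
        rw [← Real.rpow_natCast, ← Real.rpow_add (by norm_num)]
        exact Real.rpow_le_rpow_of_exponent_le (by norm_num) (by linarith)
      have a3 : (0 : ℝ) < 2 ^ p := by positivity
      have a4 : (2 : ℝ) ^ p * l ^ p ≤ 2 ^ p * (2 ^ d * l ^ q) := by
        refine a1.trans ?_
        rw [← mul_assoc]; gcongr
      exact le_of_mul_le_mul_left a4 a3
    have : N⁻¹ * (K * σ ^ 2 * 1 * ((L : ℝ) + 1) ^ p) ≤
        (K * 8 ^ d) * (σ ^ 2 / N) * l ^ (3 * (2 * (d : ℝ) - 1) / 4) := by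
      calc _ ≤ N⁻¹ * (K * σ ^ 2 * 1 * (4 ^ d * (2 ^ d * l ^ (3 * (2 * (d : ℝ) - 1) / 4)))) := by
            gcongr
            exact hT2.trans (by gcongr)
        _ = _ := by
            rw [show (8 : ℝ) = 4 * 2 by norm_num, mul_pow]; ring
    linarith
  · have hX : 1 ≤ A ^ (2 / 5 : ℝ) := Real.one_le_rpow h (by norm_num)
    rw [max_eq_right hX]
    have h3 : 1 ≤ l := by
      rw [hl, Real.le_log_iff_exp_le (by linarith)]
      have := Real.exp_one_lt_d9; linarith
    have hlp : l ^ p ≤ l ^ (3 * (2 * (d : ℝ) - 1) / 5) :=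
      Real.rpow_le_rpow_of_exponent_le h3 (by linarith)
    have : N⁻¹ * (K * σ ^ 2 * A ^ (2 / 5 : ℝ) * ((L : ℝ) + 1) ^ p) ≤
        (K * 8 ^ d) * (σ ^ 2 / N * A ^ (2 / 5 : ℝ)) * l ^ (3 * (2 * (d : ℝ) - 1) / 5) := by
      calc _ ≤ N⁻¹ * (K * σ ^ 2 * A ^ (2 / 5 : ℝ) * (8 ^ d * l ^ (3 * (2 * (d : ℝ) - 1) / 5))) := by
            gcongr
            exact hT2.trans (by gcongr)
        _ = _ := by ring
    linarith

/-- Risk bound for the constrained least-squares (projection) estimator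
onto `C(V)` on the equally spaced lattice design, for `θ* ∈ C(V)`. -/
theorem statement1 (d : ℕ) (hd : 1 ≤ d) :
    ∃ C : ℝ, 0 < C ∧
      ∀ n : Fin d → ℕ, (∀ k, 2 ≤ n k) →
      ∀ σ V : ℝ, 0 < σ → 0 < V →
      ∀ θstar : (∀ k : Fin d, Fin (n k)) → ℝ, θstar ∈ Cset d n V →
      ∀ θhat : ((∀ k : Fin d, Fin (n k)) → ℝ) → (∀ k : Fin d, Fin (n k)) → ℝ,
        (∀ y, θhat y ∈ Cset d n V ∧
          ∀ θ ∈ Cset d n V,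
            Real.sqrt (∑ i, (y i - θhat y i) ^ 2) ≤
              Real.sqrt (∑ i, (y i - θ i) ^ 2)) →
      (∫⁻ ξ, ENNReal.ofReal ((∏ k, (n k : ℝ))⁻¹ *
            ∑ i, (θhat (θstar + ξ) i - θstar i) ^ 2) ∂(gaussPi d n σ)) ≤
        ENNReal.ofReal
          (C * (σ ^ 2 * V ^ ((1 : ℝ) / 2) / ∏ k, (n k : ℝ)) ^ ((4 : ℝ) / 5) *
              Real.log (2 + V * (∏ k, (n k : ℝ)) ^ ((1 : ℝ) / 2) / σ) ^
                (3 * (2 * (d : ℝ) - 1) / 5) +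
            C * (σ ^ 2 / ∏ k, (n k : ℝ)) *
              Real.log (2 + V * (∏ k, (n k : ℝ)) ^ ((1 : ℝ) / 2) / σ) ^
                (3 * (2 * (d : ℝ) - 1) / 4) +
            C * (σ ^ 2 / ∏ k, (n k : ℝ)) * Real.log (∏ k, (n k : ℝ)) ^ 2) := by
  obtain ⟨G, hG, hhigh⟩ := high_sum d hd
  set K : ℝ := 128 * 8 ^ d + 56 * d * 8 ^ d * G with hKdef
  have hK : 0 < K := by positivity
  refine ⟨K * 8 ^ d, by positivity, ?_⟩
  intro n hn σ V hσ hV θstar hstar θhat hproj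
  have hN : (1 : ℝ) ≤ ∏ k, (n k : ℝ) := by
    rw [← Nat.cast_prod]
    exact_mod_cast Nat.one_le_iff_ne_zero.mpr
      (Finset.prod_ne_zero_iff.mpr fun k _ => by have := hn k; omega)
  have hN0 : 0 < ∏ k, (n k : ℝ) := by linarith
  obtain ⟨L, hL1, hL2, hL3⟩ := choose_L (V * (∏ k, (n k : ℝ)) ^ ((1 : ℝ) / 2) / σ) (by positivity)
  obtain ⟨Mx, hrisk⟩ := risk1 hd n hn σ V hσ hV θstar hstar θhat hproj L
  refine (hrisk (∏ k, (n k : ℝ))⁻¹ (by positivity)).trans (ENNReal.ofReal_le_ofReal ?_)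
  have hfin := finalR d hd (∏ k, (n k : ℝ)) σ V hN hσ hV K hK.le L hL3
  have hlog : 0 ≤ K * 8 ^ d * (σ ^ 2 / ∏ k, (n k : ℝ)) * Real.log (∏ k, (n k : ℝ)) ^ 2 := by positivity
  refine le_trans ?_ (hfin.trans (le_add_of_nonneg_right hlog))
  apply mul_le_mul_of_nonneg_left _ (by positivity)
  set N := ∏ k, (n k : ℝ) with hNdef
  set X := max 1 ((V * N ^ ((1 : ℝ) / 2) / σ) ^ (2 / 5 : ℝ)) with hX
  have hX0 : 0 ≤ X := le_trans zero_le_one (le_max_left _ _)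
  set T := ((L : ℝ) + 1) ^ (d - 1) with hT
  have hT0 : 0 ≤ T := by positivity
  have hs1 : 1 ≤ Real.sqrt ((L : ℝ) + 1) := by
    rw [Real.one_le_sqrt]; have : (0 : ℝ) ≤ L := Nat.cast_nonneg L
    linarith
  set s := Real.sqrt ((L : ℝ) + 1) with hs
  have hlow : 32 * σ ^ 2 * (∑ m ∈ Finset.range (L + 1), 8 ^ d * ((m : ℝ) + 1) ^ (d - 1) * 2 ^ m) ≤
      128 * 8 ^ d * (σ ^ 2 * X * (s * T)) := by
    calc _ ≤ 32 * σ ^ 2 * (8 ^ d * T * 2 ^ (L + 1)) := by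
          gcongr; exact low_sum d L
      _ ≤ 32 * σ ^ 2 * (8 ^ d * T * (4 * X)) := by
          gcongr; rw [pow_succ]; linarith
      _ = 128 * 8 ^ d * (σ ^ 2 * X * (1 * T)) := by ring
      _ ≤ _ := by gcongr
  have hhi : 8 * V * ∑ m ∈ Finset.Ico (L + 1) Mx, (7 * d * σ * Real.sqrt ((m : ℝ) + 1)) *
          (8 ^ d * Real.sqrt N * ((m : ℝ) + 1) ^ (d - 1) * qq ^ m) ≤
      56 * d * 8 ^ d * G * (σ ^ 2 * X * (s * T)) := by
    have e1 : ∑ m ∈ Finset.Ico (L + 1) Mx, (7 * d * σ * Real.sqrt ((m : ℝ) + 1)) *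
          (8 ^ d * Real.sqrt N * ((m : ℝ) + 1) ^ (d - 1) * qq ^ m) =
        (7 * d * σ * 8 ^ d * Real.sqrt N) * ∑ m ∈ Finset.Ico (L + 1) Mx,
          Real.sqrt ((m : ℝ) + 1) * (((m : ℝ) + 1) ^ (d - 1) * qq ^ m) := by
      rw [Finset.mul_sum]
      exact Finset.sum_congr rfl fun m _ => by ring
    rw [e1]
    have e2 : V * Real.sqrt N * σ = σ ^ 2 * (V * N ^ ((1 : ℝ) / 2) / σ) := by
      rw [Real.sqrt_eq_rpow]; field_simp
    calc _ ≤ 8 * V * ((7 * d * σ * 8 ^ d * Real.sqrt N) * (G * (s * T * qq ^ L))) := by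
          gcongr; exact hhigh L Mx
      _ = 56 * d * 8 ^ d * G * ((V * Real.sqrt N * σ) * qq ^ L * (s * T)) := by ring
      _ = 56 * d * 8 ^ d * G * (σ ^ 2 * ((V * N ^ ((1 : ℝ) / 2) / σ) * qq ^ L) * (s * T)) := by
          rw [e2]; ring
      _ ≤ _ := by gcongr
  calc _ ≤ _ := add_le_add hlow hhi
    _ = _ := by rw [hKdef]; ring
end

section
/- For every integer d ≥ 1 and every 0 < b ≤ 1 there exist a constant C_{b,d} > 0 depending only on b and d, and a function c : (0,∞) → (0,∞) depending only on b and d, such that the following holds. For all integers n₁,…,n_d ≥ 2 with min_j n_j ≥ b·n^{1/d}, all σ > 0 and V > 0 with n ≥ c(σ²/V²), and every Borel-measurable map T : ℝ^{I₀} → ℝ^{I₀}, there exists θ* ∈ C(V) with ∫ (1/n)·‖T(θ* + ξ) − θ*‖₂² dμ_σ(ξ) ≥ C_{b,d}·(σ²V^{1/2}/n)^{4/5}·(log(V·n^{1/2}/σ))^{4(d−1)/5} (the integral taken in [0,∞]). -/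
open Finset MeasureTheory

noncomputable def gwt {J : Type*} [Fintype J] (σ : ℝ) (v ξ : J → ℝ) : ℝ :=
  Real.exp ((∑ i, v i * ξ i) / σ ^ 2 - (∑ i, v i ^ 2) / (2 * σ ^ 2))

lemma gauss1_shift (σ : ℝ) (hσ : 0 < σ) (w : NNReal) (hw : (w : ℝ) = σ ^ 2) (v : ℝ) :
    (ProbabilityTheory.gaussianReal 0 w).map (fun x => x + v) =
    (ProbabilityTheory.gaussianReal 0 w).withDensity
      (fun x => ENNReal.ofReal (Real.exp ((v * x) / σ ^ 2 - v ^ 2 / (2 * σ ^ 2)))) := by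
  have hv : w ≠ 0 := by
    rintro rfl
    simp at hw
    exact (pow_pos hσ 2).ne hw
  rw [ProbabilityTheory.gaussianReal_map_add_const,
    ProbabilityTheory.gaussianReal_of_var_ne_zero _ hv,
    ProbabilityTheory.gaussianReal_of_var_ne_zero _ hv,
    ← withDensity_mul _ (ProbabilityTheory.measurable_gaussianPDF _ _) (by fun_prop)]
  congr 1
  funext x
  simp only [Pi.mul_apply, ProbabilityTheory.gaussianPDF, ProbabilityTheory.gaussianPDFReal]
  rw [← ENNReal.ofReal_mul (by positivity), mul_assoc _ (Real.exp _) (Real.exp _), ← Real.exp_add]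
  congr 3
  rw [hw]
  field_simp
  ring

lemma gaussPi_shift {J : Type*} [Fintype J] (σ : ℝ) (hσ : 0 < σ) (w : NNReal) (hw : (w : ℝ) = σ ^ 2) (v : J → ℝ) :
    (Measure.pi fun _ : J => ProbabilityTheory.gaussianReal 0 w).map
      (fun x => x + v) =
    (Measure.pi fun _ : J => ProbabilityTheory.gaussianReal 0 w).withDensity
      (fun x => ENNReal.ofReal (gwt σ v x)) := by
  set μ := ProbabilityTheory.gaussianReal 0 w with hμ
  have hp : ∀ i : J, IsProbabilityMeasure (μ.map (fun x => x + v i)) := fun i => by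
    rw [hμ, ProbabilityTheory.gaussianReal_map_add_const]; infer_instance
  have h1 := Measure.pi_map_pi (ι := J) (μ := fun _ => μ) (f := fun i x => x + v i)
    (fun i => by fun_prop)
  have h2 : (fun x : J → ℝ => x + v) = fun x i => x i + v i := rfl
  rw [h2, h1]
  refine Measure.pi_eq fun s hs => ?_
  let W : J → ℝ → ENNReal := fun i x =>
    ENNReal.ofReal (Real.exp ((v i * x) / σ ^ 2 - v i ^ 2 / (2 * σ ^ 2)))
  have hW : ∀ i, Measurable (W i) := fun i => by fun_prop
  have hprod : ∀ x : J → ℝ, ENNReal.ofReal (gwt σ v x) = ∏ i, W i (x i) := fun x => by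
    simp only [W]
    rw [← ENNReal.ofReal_prod_of_nonneg (fun i _ => (Real.exp_pos _).le), ← Real.exp_sum]
    unfold gwt
    rw [Finset.sum_sub_distrib, Finset.sum_div, Finset.sum_div]
  rw [withDensity_apply _ (MeasurableSet.univ_pi hs), ← lintegral_indicator (MeasurableSet.univ_pi hs)]
  have h3 : ∀ x : J → ℝ, (Set.univ.pi s).indicator (fun x => ENNReal.ofReal (gwt σ v x)) x
      = ∏ i, (s i).indicator (W i) (x i) := fun x => by
    by_cases hx : x ∈ Set.univ.pi s
    · rw [Set.indicator_of_mem hx, hprod]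
      refine Finset.prod_congr rfl fun i _ => ?_
      rw [Set.indicator_of_mem (hx i (Set.mem_univ i))]
    · rw [Set.indicator_of_notMem hx]
      simp only [Set.mem_pi, Set.mem_univ, true_imp_iff, not_forall] at hx
      obtain ⟨i, hi⟩ := hx
      exact (Finset.prod_eq_zero (Finset.mem_univ i) (Set.indicator_of_notMem hi _)).symm
  rw [lintegral_congr h3,
    ProbabilityTheory.lintegral_prod_eq_prod_lintegral_of_indepFun Finset.univ
      (fun i (x : J → ℝ) => (s i).indicator (W i) (x i))
      (ProbabilityTheory.iIndepFun_pi (fun i => ((hW i).indicator (hs i)).aemeasurable))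
      (fun i => ((hW i).indicator (hs i)).comp (measurable_pi_apply i))]
  refine Finset.prod_congr rfl fun i _ => ?_
  rw [gauss1_shift σ hσ w hw, withDensity_apply _ (hs i), ← lintegral_indicator (hs i)]
  have := (measurePreserving_eval (fun _ : J => μ) i).lintegral_comp ((hW i).indicator (hs i))
  exact this

lemma lint_shift {J : Type*} [Fintype J] (σ : ℝ) (hσ : 0 < σ) (w : NNReal) (hw : (w : ℝ) = σ ^ 2) (v : J → ℝ)
    (f : (J → ℝ) → ENNReal) (hf : Measurable f) :
    ∫⁻ ξ, f (ξ + v) ∂(Measure.pi fun _ : J => ProbabilityTheory.gaussianReal 0 w)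
    = ∫⁻ ξ, ENNReal.ofReal (gwt σ v ξ) * f ξ
      ∂(Measure.pi fun _ : J => ProbabilityTheory.gaussianReal 0 w) := by
  have hg : Measurable (fun ξ : J → ℝ => ENNReal.ofReal (gwt σ v ξ)) := by
    unfold gwt; fun_prop
  have := lintegral_map (μ := (Measure.pi fun _ : J =>
    ProbabilityTheory.gaussianReal 0 w)) hf
    (show Measurable (fun x : J → ℝ => x + v) by fun_prop)
  rw [← this, gaussPi_shift σ hσ w hw, lintegral_withDensity_eq_lintegral_mul _ hg hf]
  rfl

/-- two point bound -/
lemma two_point {J : Type*} [Fintype J] (σ : ℝ) (hσ : 0 < σ) (w : NNReal) (hw : (w : ℝ) = σ ^ 2) (v m : J → ℝ)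
    (hv : ∑ i, v i ^ 2 ≤ σ ^ 2) (t : (J → ℝ) → ℝ) (ht : Measurable t) (τ : ℝ) :
    ENNReal.ofReal (2 * τ ^ 2 * Real.exp (-1)) ≤
    ∫⁻ ξ, ENNReal.ofReal ((t (m + v + ξ) - τ) ^ 2)
      ∂(Measure.pi fun _ : J => ProbabilityTheory.gaussianReal 0 w) +
    ∫⁻ ξ, ENNReal.ofReal ((t (m - v + ξ) + τ) ^ 2)
      ∂(Measure.pi fun _ : J => ProbabilityTheory.gaussianReal 0 w) := by
  set P := (Measure.pi fun _ : J => ProbabilityTheory.gaussianReal 0 w) with hP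
  have hgm : ∀ v : J → ℝ, Measurable (fun ξ : J → ℝ => ENNReal.ofReal (gwt σ v ξ)) := fun v => by
    unfold gwt; fun_prop
  have hgm' : ∀ v : J → ℝ, Measurable (fun ξ : J → ℝ => gwt σ v ξ) := fun v => by
    unfold gwt; fun_prop
  have e1 : ∫⁻ ξ, ENNReal.ofReal ((t (m + v + ξ) - τ) ^ 2) ∂P =
      ∫⁻ ξ, ENNReal.ofReal (gwt σ v ξ) * ENNReal.ofReal ((t (m + ξ) - τ) ^ 2) ∂P := by
    rw [hP, ← lint_shift σ hσ w hw v (fun ξ => ENNReal.ofReal ((t (m + ξ) - τ) ^ 2)) (by fun_prop)]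
    refine lintegral_congr fun ξ => ?_
    rw [show m + v + ξ = m + (ξ + v) by abel]
  have e2 : ∫⁻ ξ, ENNReal.ofReal ((t (m - v + ξ) + τ) ^ 2) ∂P =
      ∫⁻ ξ, ENNReal.ofReal (gwt σ (-v) ξ) * ENNReal.ofReal ((t (m + ξ) + τ) ^ 2) ∂P := by
    rw [hP, ← lint_shift σ hσ w hw (-v) (fun ξ => ENNReal.ofReal ((t (m + ξ) + τ) ^ 2)) (by fun_prop)]
    refine lintegral_congr fun ξ => ?_
    rw [show m - v + ξ = m + (ξ + -v) by abel]
  have one : ∀ v : J → ℝ, ∫⁻ ξ, ENNReal.ofReal (gwt σ v ξ) ∂P = 1 := fun v => by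
    have := lint_shift σ hσ w hw v (fun _ => 1) measurable_const
    simp only [mul_one, lintegral_const, measure_univ] at this
    exact this.symm
  set κ := τ ^ 2 * Real.exp (-1) with hκ
  have hκ0 : 0 ≤ κ := by positivity
  have hpt : ∀ ξ : J → ℝ, ENNReal.ofReal (4 * κ) ≤
      (ENNReal.ofReal (gwt σ v ξ) * ENNReal.ofReal ((t (m + ξ) - τ) ^ 2) +
      ENNReal.ofReal (gwt σ (-v) ξ) * ENNReal.ofReal ((t (m + ξ) + τ) ^ 2)) +
      ENNReal.ofReal κ * (ENNReal.ofReal (gwt σ v ξ) + ENNReal.ofReal (gwt σ (-v) ξ)) := by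
    intro ξ
    have hx : 0 < gwt σ v ξ := Real.exp_pos _
    have hy : 0 < gwt σ (-v) ξ := Real.exp_pos _
    have hxy : Real.exp (-1) ≤ gwt σ v ξ * gwt σ (-v) ξ := by
      unfold gwt
      rw [← Real.exp_add]
      apply Real.exp_le_exp.2
      simp only [Pi.neg_apply, neg_mul, Finset.sum_neg_distrib, neg_sq]
      have : (∑ i, v i ^ 2) / (2 * σ ^ 2) ≤ 1 / 2 := by
        rw [div_le_div_iff₀ (by positivity) (by norm_num)]; linarith
      rw [neg_div]
      linarith
    set x := gwt σ v ξ
    set y := gwt σ (-v) ξ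
    set s := t (m + ξ)
    rw [← ENNReal.ofReal_mul hx.le, ← ENNReal.ofReal_mul hy.le,
      ← ENNReal.ofReal_add (by positivity) (by positivity),
      ← ENNReal.ofReal_add hx.le hy.le, ← ENNReal.ofReal_mul hκ0,
      ← ENNReal.ofReal_add (by positivity) (by positivity)]
    apply ENNReal.ofReal_le_ofReal
    have hz : 0 < x + y := by positivity
    have a1 : 4 * τ ^ 2 * (x * y) ≤ (x * (s - τ) ^ 2 + y * (s + τ) ^ 2) * (x + y) := by
      nlinarith [sq_nonneg (x * (s - τ) + y * (s + τ))]
    have a2 : 4 * κ ≤ (x * (s - τ) ^ 2 + y * (s + τ) ^ 2) * (x + y) := by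
      refine le_trans ?_ a1
      rw [hκ]
      nlinarith [mul_le_mul_of_nonneg_left hxy (sq_nonneg τ)]
    have a3 : 4 * κ * (x + y) ≤
        (x * (s - τ) ^ 2 + y * (s + τ) ^ 2 + κ * (x + y)) * (x + y) := by
      nlinarith [mul_nonneg hκ0 (sq_nonneg (x + y - 2))]
    exact le_of_mul_le_mul_right a3 hz
  have hint := lintegral_mono (μ := P) hpt
  have mA : Measurable (fun ξ => ENNReal.ofReal (gwt σ v ξ) *
      ENNReal.ofReal ((t (m + ξ) - τ) ^ 2)) := (hgm v).mul (by fun_prop)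
  have mB : Measurable (fun ξ => ENNReal.ofReal (gwt σ (-v) ξ) *
      ENNReal.ofReal ((t (m + ξ) + τ) ^ 2)) := (hgm (-v)).mul (by fun_prop)
  rw [lintegral_add_left (show Measurable (fun ξ => ENNReal.ofReal (gwt σ v ξ) *
      ENNReal.ofReal ((t (m + ξ) - τ) ^ 2) + ENNReal.ofReal (gwt σ (-v) ξ) *
      ENNReal.ofReal ((t (m + ξ) + τ) ^ 2)) from mA.add mB), lintegral_add_left mA,
    lintegral_const_mul _ (show Measurable (fun ξ => ENNReal.ofReal (gwt σ v ξ) + ENNReal.ofReal (gwt σ (-v) ξ))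
      from (hgm v).add (hgm (-v))), lintegral_add_left (hgm v), one, one,
    lintegral_const, measure_univ, mul_one, ← e1, ← e2] at hint
  have h4 : ENNReal.ofReal (4 * κ) = ENNReal.ofReal (2 * κ) + ENNReal.ofReal κ * (1 + 1) := by
    rw [one_add_one_eq_two, show (2 : ENNReal) = ENNReal.ofReal 2 by simp,
      ← ENNReal.ofReal_mul hκ0, ← ENNReal.ofReal_add (by positivity) (by positivity)]
    congr 1; ring
  rw [h4] at hint
  have := (ENNReal.add_le_add_iff_right (by finiteness)).1 hint
  rwa [mul_assoc, ← hκ]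


lemma orth_sq {ι J : Type*} [Fintype ι] (s : Finset J) (U : ι → J → ℝ)
    (ho : ∀ p q, p ≠ q → ∑ i ∈ s, U p i * U q i = 0) (c : ι → ℝ) :
    ∑ i ∈ s, (∑ p, c p * U p i) ^ 2 = ∑ p, c p ^ 2 * ∑ i ∈ s, U p i ^ 2 := by
  have h1 : ∀ i, (∑ p, c p * U p i) ^ 2 = ∑ p, ∑ q, c p * c q * (U p i * U q i) := fun i => by
    rw [sq, Finset.sum_mul_sum]
    refine Finset.sum_congr rfl fun p _ => Finset.sum_congr rfl fun q _ => by ring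
  simp_rw [h1]
  rw [Finset.sum_comm]
  refine Finset.sum_congr rfl fun p _ => ?_
  rw [Finset.sum_comm, Finset.sum_eq_single p]
  · rw [Finset.mul_sum]
    refine Finset.sum_congr rfl fun i _ => by ring
  · intro q _ hq
    rw [← Finset.mul_sum, ho p q hq.symm, mul_zero]
  · simp

lemma bessel {ι J : Type*} [Fintype ι] [Fintype J] (U : ι → J → ℝ)
    (ho : ∀ p q, p ≠ q → ∑ i, U p i * U q i = 0) (hpos : ∀ p, 0 < ∑ i, U p i ^ 2) (x : J → ℝ) :
    ∑ p, (∑ i, U p i ^ 2)⁻¹ * (∑ i, x i * U p i) ^ 2 ≤ ∑ i, x i ^ 2 := by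
  set c : ι → ℝ := fun p => (∑ i, U p i ^ 2)⁻¹ * (∑ i, x i * U p i) with hc
  have h0 : 0 ≤ ∑ i, (x i - ∑ p, c p * U p i) ^ 2 := Finset.sum_nonneg fun i _ => sq_nonneg _
  have h1 : ∑ i, (x i - ∑ p, c p * U p i) ^ 2 =
      ∑ i, x i ^ 2 - 2 * ∑ i, x i * (∑ p, c p * U p i) + ∑ i, (∑ p, c p * U p i) ^ 2 := by
    rw [Finset.mul_sum, ← Finset.sum_sub_distrib, ← Finset.sum_add_distrib]
    refine Finset.sum_congr rfl fun i _ => by ring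
  have h2 : ∑ i, x i * (∑ p, c p * U p i) =
      ∑ p, (∑ i, U p i ^ 2)⁻¹ * (∑ i, x i * U p i) ^ 2 := by
    simp_rw [Finset.mul_sum]
    rw [Finset.sum_comm]
    refine Finset.sum_congr rfl fun p _ => ?_
    rw [sq, ← mul_assoc, Finset.mul_sum]
    refine Finset.sum_congr rfl fun i _ => by simp only [hc]; ring
  have h3 : ∑ p, c p ^ 2 * ∑ i, U p i ^ 2 =
      ∑ p, (∑ i, U p i ^ 2)⁻¹ * (∑ i, x i * U p i) ^ 2 := by
    refine Finset.sum_congr rfl fun p _ => ?_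
    have := (hpos p).ne'
    simp only [hc]
    field_simp
  rw [h1, orth_sq Finset.univ U ho c, h2, h3] at h0
  linarith

def sg (b : Bool) : ℝ := if b then 1 else -1

lemma sg_sq (b : Bool) : sg b ^ 2 = 1 := by cases b <;> simp [sg]

lemma sg_not (b : Bool) : sg (!b) = - sg b := by cases b <;> simp [sg]

noncomputable def thet {ι J : Type*} [Fintype ι] (a : ℝ) (U : ι → J → ℝ) (ε : ι → Bool) : J → ℝ :=
  fun i => ∑ p, (a * sg (ε p)) * U p i

lemma thet_flip {ι J : Type*} [Fintype ι] [DecidableEq ι] (a : ℝ) (U : ι → J → ℝ) (ε : ι → Bool)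
    (p : ι) : thet a U (Function.update ε p (!ε p)) =
      thet a U ε - (fun i => 2 * (sg (ε p) * (a * U p i))) := by
  funext i
  simp only [thet, Pi.sub_apply]
  suffices h : ∑ q, (a * sg (Function.update ε p (!ε p) q)) * U q i -
      ∑ q, (a * sg (ε q)) * U q i = - (2 * (sg (ε p) * (a * U p i))) by linarith
  rw [← Finset.sum_sub_distrib, Finset.sum_eq_single p]
  · simp only [Function.update_self, sg_not]; ring
  · intro q _ hq
    rw [Function.update_of_ne hq]; ring
  · simp

lemma assouad {ι J : Type*} [Fintype ι] [DecidableEq ι] [Fintype J] (σ : ℝ) (hσ : 0 < σ)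
    (w : NNReal) (hw : (w : ℝ) = σ ^ 2) (U : ι → J → ℝ) (a lo : ℝ) (hlo : 0 < lo)
    (ho : ∀ p q, p ≠ q → ∑ i, U p i * U q i = 0) (hl : ∀ p, lo ≤ ∑ i, U p i ^ 2)
    (hu : ∀ p, a ^ 2 * ∑ i, U p i ^ 2 ≤ σ ^ 2) (T : (J → ℝ) → J → ℝ) (hT : Measurable T) :
    ∃ ε : ι → Bool, ENNReal.ofReal (a ^ 2 * Fintype.card ι * lo * Real.exp (-1)) ≤
      ∫⁻ ξ, ENNReal.ofReal (∑ i, (T (thet a U ε + ξ) i - thet a U ε i) ^ 2)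
        ∂(Measure.pi fun _ : J => ProbabilityTheory.gaussianReal 0 w) := by
  set P := (Measure.pi fun _ : J => ProbabilityTheory.gaussianReal 0 w) with hP
  have hpos : ∀ p, 0 < ∑ i, U p i ^ 2 := fun p => hlo.trans_le (hl p)
  set N : ι → ℝ := fun p => ∑ i, U p i ^ 2 with hN
  let t : ι → (J → ℝ) → ℝ := fun p y => ∑ i, T y i * U p i
  have ht : ∀ p, Measurable (t p) := fun p => by
    simp only [t]; fun_prop
  let F : ι → (ι → Bool) → ENNReal := fun p ε =>
    ∫⁻ ξ, ENNReal.ofReal ((t p (thet a U ε + ξ) - sg (ε p) * (a * N p)) ^ 2) ∂P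
  have hmulN : ∀ p x, ENNReal.ofReal (N p)⁻¹ * ENNReal.ofReal x = ENNReal.ofReal ((N p)⁻¹ * x) :=
    fun p x => (ENNReal.ofReal_mul (inv_nonneg.2 (hpos p).le)).symm
  have s1 : ∀ ε, ∑ p, ENNReal.ofReal (N p)⁻¹ * F p ε ≤
      ∫⁻ ξ, ENNReal.ofReal (∑ i, (T (thet a U ε + ξ) i - thet a U ε i) ^ 2) ∂P := by
    intro ε
    have hm : ∀ p, Measurable (fun ξ : J → ℝ =>
        ENNReal.ofReal ((t p (thet a U ε + ξ) - sg (ε p) * (a * N p)) ^ 2)) := fun p => by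
      have := ht p
      fun_prop
    simp only [F]
    simp_rw [← lintegral_const_mul _ (hm _)]
    rw [← lintegral_finsetSum _ (fun p _ => (hm p).const_mul _)]
    refine lintegral_mono fun ξ => ?_
    simp only
    simp_rw [hmulN]
    rw [← ENNReal.ofReal_sum_of_nonneg
      (fun p _ => mul_nonneg (inv_nonneg.2 (hpos p).le) (sq_nonneg _))]
    apply ENNReal.ofReal_le_ofReal
    refine le_trans (le_of_eq ?_) (bessel U ho hpos (fun i => T (thet a U ε + ξ) i - thet a U ε i))
    refine Finset.sum_congr rfl fun p _ => ?_
    congr 2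
    simp only [t, sub_mul, Finset.sum_sub_distrib]
    congr 1
    simp only [thet, Finset.sum_mul]
    rw [Finset.sum_comm, Finset.sum_eq_single p]
    · simp only [hN]
      rw [Finset.mul_sum, Finset.mul_sum]
      refine Finset.sum_congr rfl fun i _ => by ring
    · intro q _ hq
      have := ho q p hq
      calc ∑ i, a * sg (ε q) * U q i * U p i = ∑ i, (a * sg (ε q)) * (U q i * U p i) :=
            Finset.sum_congr rfl fun i _ => by ring
        _ = 0 := by rw [← Finset.mul_sum, this, mul_zero]
    · simp
  have s2 : ∀ p, ∑ _ε : ι → Bool, ENNReal.ofReal ((a * N p) ^ 2 * Real.exp (-1)) ≤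
      ∑ ε, F p ε := by
    intro p
    have hinv : Function.Involutive (fun ε : ι → Bool => Function.update ε p (!ε p)) := by
      intro ε
      simp
    have hflip : ∑ ε, F p (Function.update ε p (!ε p)) = ∑ ε, F p ε :=
      Equiv.sum_comp hinv.toPerm (F p)
    have hpair : ∀ ε, ENNReal.ofReal (2 * (a * N p) ^ 2 * Real.exp (-1)) ≤
        F p ε + F p (Function.update ε p (!ε p)) := by
      intro ε
      set v : J → ℝ := fun i => sg (ε p) * (a * U p i) with hv
      have hvv : ∑ i, v i ^ 2 ≤ σ ^ 2 := by
        refine le_trans (le_of_eq ?_) (hu p)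
        rw [Finset.mul_sum]
        refine Finset.sum_congr rfl fun i _ => ?_
        simp only [hv]; rw [mul_pow, sg_sq]; ring
      have := two_point σ hσ w hw v (thet a U ε - v) hvv (t p) (ht p) (sg (ε p) * (a * N p))
      rw [mul_pow, sg_sq, one_mul] at this
      refine this.trans (le_of_eq ?_)
      simp only [F, Function.update_self, sg_not, thet_flip]
      congr 1
      · simp only [sub_add_cancel]; rfl
      · refine lintegral_congr fun ξ => ?_
        congr 2
        rw [neg_mul, sub_neg_eq_add]
        congr 3
        funext i
        simp only [Pi.sub_apply, hv]; ring
    have h2 : ∑ _ε : ι → Bool, ENNReal.ofReal (2 * (a * N p) ^ 2 * Real.exp (-1)) ≤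
        2 * ∑ ε, F p ε := by
      refine (Finset.sum_le_sum fun ε _ => hpair ε).trans (le_of_eq ?_)
      rw [Finset.sum_add_distrib, hflip, two_mul]
    have h3 : ENNReal.ofReal (2 * (a * N p) ^ 2 * Real.exp (-1)) =
        2 * ENNReal.ofReal ((a * N p) ^ 2 * Real.exp (-1)) := by
      rw [mul_assoc, ENNReal.ofReal_mul (by norm_num)]; simp
    rw [h3, ← Finset.mul_sum] at h2
    exact (ENNReal.mul_le_mul_iff_right (by norm_num) (by norm_num)).1 h2
  have s3 : ∑ _ε : ι → Bool, ENNReal.ofReal (a ^ 2 * Fintype.card ι * lo * Real.exp (-1)) ≤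
      ∑ ε, ∫⁻ ξ, ENNReal.ofReal (∑ i, (T (thet a U ε + ξ) i - thet a U ε i) ^ 2) ∂P := by
    refine le_trans ?_ (Finset.sum_le_sum fun ε _ => s1 ε)
    rw [Finset.sum_comm]
    simp_rw [← Finset.mul_sum]
    refine le_trans ?_ (Finset.sum_le_sum fun p _ => mul_le_mul_right (s2 p) _)
    simp_rw [Finset.mul_sum]
    rw [Finset.sum_comm]
    refine Finset.sum_le_sum fun ε _ => ?_
    simp_rw [hmulN]
    rw [← ENNReal.ofReal_sum_of_nonneg
      (fun p _ => mul_nonneg (inv_nonneg.2 (hpos p).le) (by positivity))]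
    apply ENNReal.ofReal_le_ofReal
    have : ∀ p ∈ (Finset.univ : Finset ι), a ^ 2 * lo * Real.exp (-1) ≤
        (N p)⁻¹ * ((a * N p) ^ 2 * Real.exp (-1)) := by
      intro p _
      have h := hpos p
      have : (N p)⁻¹ * ((a * N p) ^ 2 * Real.exp (-1)) = a ^ 2 * N p * Real.exp (-1) := by
        have : N p ≠ 0 := h.ne'
        field_simp
      rw [this]
      have := hl p
      gcongr
    refine le_trans (le_of_eq ?_) (Finset.sum_le_sum this)
    rw [Finset.sum_const, Finset.card_univ, nsmul_eq_mul]; ring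
  by_contra hcon
  push Not at hcon
  exact absurd s3 (not_le.2 (ENNReal.sum_lt_sum_of_nonempty Finset.univ_nonempty
    (fun ε _ => hcon ε)))


lemma cos_sum_zero (N : ℕ) (hN : 0 < N) (m : ℤ) (hm : m ≠ 0) (h1 : -(2 * N : ℤ) < m)
    (h2 : m < 2 * N) :
    ∑ j ∈ Finset.range N, Real.cos (Real.pi * m / N * (j + 1 / 2)) = 0 := by
  have hN' : (0 : ℝ) < N := by exact_mod_cast hN
  set h : ℝ := Real.pi * m / N with hh
  have hs : Real.sin (h / 2) ≠ 0 := by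
    have h1' : -(2 * N : ℝ) < m := by exact_mod_cast h1
    have h2' : (m : ℝ) < 2 * N := by exact_mod_cast h2
    have e : h / 2 = Real.pi * (m / (2 * N)) := by rw [hh]; field_simp
    have b1 : -1 < (m : ℝ) / (2 * N) := by rw [lt_div_iff₀ (by positivity)]; linarith
    have b2 : (m : ℝ) / (2 * N) < 1 := by rw [div_lt_iff₀ (by positivity)]; linarith
    rw [Ne, Real.sin_eq_zero_iff_of_lt_of_lt]
    · rw [e]
      have : (m : ℝ) ≠ 0 := by exact_mod_cast hm
      have := Real.pi_pos
      positivity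
    · rw [e]; nlinarith [Real.pi_pos]
    · rw [e]; nlinarith [Real.pi_pos]
  have ht : ∀ j : ℕ, 2 * Real.sin (h / 2) * Real.cos (h * (j + 1 / 2)) =
      Real.sin (h * ((j + 1 : ℕ) : ℝ)) - Real.sin (h * (j : ℝ)) := by
    intro j
    rw [Real.sin_sub_sin]
    push_cast
    rw [show (h * ((j : ℝ) + 1) - h * j) / 2 = h / 2 by ring,
      show (h * ((j : ℝ) + 1) + h * j) / 2 = h * (j + 1 / 2) by ring]
  have hsum : 2 * Real.sin (h / 2) * ∑ j ∈ Finset.range N, Real.cos (h * (j + 1 / 2)) = 0 := by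
    rw [Finset.mul_sum, Finset.sum_congr rfl fun j _ => ht j,
      Finset.sum_range_sub (fun j : ℕ => Real.sin (h * (j : ℝ)))]
    have : h * N = m * Real.pi := by rw [hh]; field_simp
    rw [this, Real.sin_int_mul_pi]; simp
  rcases mul_eq_zero.1 hsum with h | h
  · exact absurd h (by simpa using hs)
  · exact h

noncomputable def ph (N κ j : ℕ) : ℝ := Real.cos (Real.pi * κ / N * (j + 1 / 2))

lemma ph_mul (N κ κ' j : ℕ) : ph N κ j * ph N κ' j =
    (Real.cos (Real.pi * ((κ : ℤ) - κ' : ℤ) / N * (j + 1 / 2)) +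
      Real.cos (Real.pi * ((κ : ℤ) + κ' : ℤ) / N * (j + 1 / 2))) / 2 := by
  unfold ph
  push_cast
  have := Real.two_mul_cos_mul_cos (Real.pi * κ / N * (j + 1 / 2)) (Real.pi * κ' / N * (j + 1 / 2))
  have e1 : Real.pi * ((κ : ℝ) - κ') / N * (j + 1 / 2) =
    Real.pi * κ / N * (j + 1 / 2) - Real.pi * κ' / N * (j + 1 / 2) := by ring
  have e2 : Real.pi * ((κ : ℝ) + κ') / N * (j + 1 / 2) =
    Real.pi * κ / N * (j + 1 / 2) + Real.pi * κ' / N * (j + 1 / 2) := by ring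
  rw [e1, e2]; linarith

lemma ph_orth (N κ κ' : ℕ) (hκ : κ < N) (hκ' : κ' < N) (hne : κ ≠ κ') :
    ∑ j ∈ Finset.range N, ph N κ j * ph N κ' j = 0 := by
  simp_rw [ph_mul]
  rw [← Finset.sum_div, Finset.sum_add_distrib, cos_sum_zero N (by omega) _ (by omega) (by omega)
    (by omega), cos_sum_zero N (by omega) _ (by omega) (by omega) (by omega)]
  simp

lemma ph_self (N κ : ℕ) (hκ : κ < N) (h0 : 0 < κ) :
    ∑ j ∈ Finset.range N, ph N κ j * ph N κ j = N / 2 := by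
  simp_rw [ph_mul]
  rw [← Finset.sum_div, Finset.sum_add_distrib,
    cos_sum_zero N (by omega) ((κ : ℤ) + κ) (by omega) (by omega) (by omega)]
  simp

lemma comb_orth (N k1 k2 l1 l2 : ℕ) (α β γ δ : ℝ) (h1 : k1 < N) (h2 : k2 < N) (h3 : l1 < N)
    (h4 : l2 < N) (a1 : k1 ≠ l1) (a2 : k1 ≠ l2) (a3 : k2 ≠ l1) (a4 : k2 ≠ l2) :
    ∑ j ∈ Finset.range N, (α * ph N k1 j - β * ph N k2 j) * (γ * ph N l1 j - δ * ph N l2 j) = 0 := by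
  have : ∀ j, (α * ph N k1 j - β * ph N k2 j) * (γ * ph N l1 j - δ * ph N l2 j) =
      α * γ * (ph N k1 j * ph N l1 j) - α * δ * (ph N k1 j * ph N l2 j)
      - β * γ * (ph N k2 j * ph N l1 j) + β * δ * (ph N k2 j * ph N l2 j) := fun j => by ring
  simp_rw [this]
  rw [Finset.sum_add_distrib, Finset.sum_sub_distrib, Finset.sum_sub_distrib]
  simp_rw [← Finset.mul_sum]
  rw [ph_orth N _ _ h1 h3 a1, ph_orth N _ _ h1 h4 a2, ph_orth N _ _ h2 h3 a3, ph_orth N _ _ h2 h4 a4]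
  ring

lemma comb_sq (N k1 k2 : ℕ) (α β : ℝ) (h1 : k1 < N) (h2 : k2 < N) (h10 : 0 < k1) (h20 : 0 < k2)
    (a : k1 ≠ k2) :
    ∑ j ∈ Finset.range N, (α * ph N k1 j - β * ph N k2 j) ^ 2 = (α ^ 2 + β ^ 2) * (N / 2) := by
  have : ∀ j, (α * ph N k1 j - β * ph N k2 j) ^ 2 =
      α ^ 2 * (ph N k1 j * ph N k1 j) - 2 * α * β * (ph N k1 j * ph N k2 j)
       + β ^ 2 * (ph N k2 j * ph N k2 j) := fun j => by ring
  simp_rw [this]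
  rw [Finset.sum_add_distrib, Finset.sum_sub_distrib]
  simp_rw [← Finset.mul_sum]
  rw [ph_orth N _ _ h1 h2 a, ph_self N _ h1 h10, ph_self N _ h2 h20]
  ring

lemma second_diff (h x : ℝ) :
    Real.cos (h * (x + 1)) - 2 * Real.cos (h * x) + Real.cos (h * (x - 1)) =
      -((2 - 2 * Real.cos h) * Real.cos (h * x)) := by
  rw [show h * (x + 1) = h * x + h by ring, show h * (x - 1) = h * x - h by ring, Real.cos_add,
    Real.cos_sub]
  ring

lemma lam_bd (h : ℝ) (B : ℝ) (h0 : 0 ≤ h) (hB : h ≤ B) : (2 - 2 * Real.cos h) ^ 2 ≤ B ^ 4 := by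
  have h1 := Real.one_sub_sq_div_two_le_cos (x := h)
  have h2 := Real.cos_le_one h
  have h3 : 2 - 2 * Real.cos h ≤ B ^ 2 := by nlinarith
  calc (2 - 2 * Real.cos h) ^ 2 ≤ (B ^ 2) ^ 2 := by
        apply pow_le_pow_left₀ (by linarith) h3
    _ = B ^ 4 := by ring

lemma cos_half_bd (h : ℝ) (h0 : 0 ≤ h) (h1 : h ≤ Real.pi * (2 / 3)) :
    1 / 4 ≤ Real.cos (h / 2) ^ 2 ∧ Real.cos (h / 2) ^ 2 ≤ 1 := by
  have a1 : 1 / 2 ≤ Real.cos (h / 2) := by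
    rw [← Real.cos_pi_div_three]
    apply Real.cos_le_cos_of_nonneg_of_le_pi <;> linarith [Real.pi_pos]
  have a2 := Real.cos_le_one (h / 2)
  constructor <;> nlinarith

lemma oneD (n : ℕ) (hn : 2 ≤ n) : ∃ u g : ℕ → ℕ → ℝ,
    (∀ p, u p 0 = 0) ∧ (∀ p, u p 1 = 0) ∧
    (∀ p i, u p (i + 2) - 2 * u p (i + 1) + u p i = g p i) ∧
    (∀ p q, 1 ≤ p → 3 * (2 * p + 1) ≤ 2 * (n - 1) → 1 ≤ q → 3 * (2 * q + 1) ≤ 2 * (n - 1) →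
      p ≠ q → ∑ i ∈ Finset.range n, u p i * u q i = 0) ∧
    (∀ p, 1 ≤ p → 3 * (2 * p + 1) ≤ 2 * (n - 1) →
      (n : ℝ) / 8 ≤ ∑ i ∈ Finset.range n, u p i ^ 2) ∧
    (∀ p, 1 ≤ p → 3 * (2 * p + 1) ≤ 2 * (n - 1) →
      ∑ i ∈ Finset.range n, u p i ^ 2 ≤ (n : ℝ)) ∧
    (∀ p q, 1 ≤ p → 3 * (2 * p + 1) ≤ 2 * (n - 1) → 1 ≤ q → 3 * (2 * q + 1) ≤ 2 * (n - 1) →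
      p ≠ q → ∑ i ∈ Finset.range (n - 1), g p i * g q i = 0) ∧
    (∀ p, 1 ≤ p → 3 * (2 * p + 1) ≤ 2 * (n - 1) →
      ∑ i ∈ Finset.range (n - 1), g p i ^ 2 ≤ 80000 * (p : ℝ) ^ 4 / (n : ℝ) ^ 3) := by
  obtain ⟨N, rfl⟩ : ∃ N, n = N + 1 := ⟨n - 1, by omega⟩
  simp only [Nat.add_sub_cancel]
  have hN : 1 ≤ N := by omega
  have hNr : (1 : ℝ) ≤ N := by exact_mod_cast hN
  let h1 : ℕ → ℝ := fun p => Real.pi * ((2 * p : ℕ) : ℝ) / N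
  let h2 : ℕ → ℝ := fun p => Real.pi * ((2 * p + 1 : ℕ) : ℝ) / N
  let c1 : ℕ → ℝ := fun p => Real.cos (h1 p / 2)
  let c2 : ℕ → ℝ := fun p => Real.cos (h2 p / 2)
  let u : ℕ → ℕ → ℝ := fun p i =>
    c2 p * Real.cos (h1 p * (i - 1 / 2)) - c1 p * Real.cos (h2 p * (i - 1 / 2))
  let g : ℕ → ℕ → ℝ := fun p i =>
    (c2 p * -(2 - 2 * Real.cos (h1 p))) * ph N (2 * p) i -
      (c1 p * -(2 - 2 * Real.cos (h2 p))) * ph N (2 * p + 1) i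
  have hu0 : ∀ p, u p 0 = 0 := fun p => by
    simp only [u, c1, c2]
    rw [show h1 p * (((0 : ℕ) : ℝ) - 1 / 2) = -(h1 p / 2) by push_cast; ring,
      show h2 p * (((0 : ℕ) : ℝ) - 1 / 2) = -(h2 p / 2) by push_cast; ring, Real.cos_neg,
      Real.cos_neg]
    ring
  have hu1 : ∀ p, u p 1 = 0 := fun p => by
    simp only [u, c1, c2]
    rw [show h1 p * (((1 : ℕ) : ℝ) - 1 / 2) = (h1 p / 2) by push_cast; ring,
      show h2 p * (((1 : ℕ) : ℝ) - 1 / 2) = (h2 p / 2) by push_cast; ring]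
    ring
  have hus : ∀ p i, u p (i + 1) = c2 p * ph N (2 * p) i - c1 p * ph N (2 * p + 1) i :=
    fun p i => by
      simp only [u, ph, h1, h2]
      rw [show (((i + 1 : ℕ) : ℝ) - 1 / 2) = (i : ℝ) + 1 / 2 by push_cast; ring]
  have hh1 : ∀ p, 0 ≤ h1 p := fun p => by have := Real.pi_pos; positivity
  have hh2 : ∀ p, 0 ≤ h2 p := fun p => by have := Real.pi_pos; positivity
  have hh12 : ∀ p, h1 p ≤ h2 p := fun p => by
    have := Real.pi_pos
    simp only [h1, h2]; gcongr; omega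
  have hh2b : ∀ p, 3 * (2 * p + 1) ≤ 2 * N → h2 p ≤ Real.pi * (2 / 3) := fun p hp => by
    simp only [h2]
    rw [mul_div_assoc]
    have := Real.pi_pos
    refine mul_le_mul_of_nonneg_left ?_ this.le
    rw [div_le_div_iff₀ (by positivity) (by norm_num)]
    exact_mod_cast (by omega : (2 * p + 1) * 3 ≤ 2 * N)
  have hc1 : ∀ p, 3 * (2 * p + 1) ≤ 2 * N → 1 / 4 ≤ c1 p ^ 2 ∧ c1 p ^ 2 ≤ 1 := fun p hp =>
    cos_half_bd _ (hh1 p) ((hh12 p).trans (hh2b p hp))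
  have hc2 : ∀ p, 3 * (2 * p + 1) ≤ 2 * N → 1 / 4 ≤ c2 p ^ 2 ∧ c2 p ^ 2 ≤ 1 := fun p hp =>
    cos_half_bd _ (hh2 p) (hh2b p hp)
  have husq : ∀ p, 1 ≤ p → 3 * (2 * p + 1) ≤ 2 * N →
      ∑ i ∈ Finset.range (N + 1), u p i ^ 2 = (c2 p ^ 2 + c1 p ^ 2) * (N / 2) := by
    intro p hp hp'
    rw [Finset.sum_range_succ', hu0]
    simp_rw [hus]
    rw [comb_sq N _ _ _ _ (by omega) (by omega) (by omega) (by omega) (by omega)]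
    ring
  refine ⟨u, g, hu0, hu1, ?_, ?_, ?_, ?_, ?_, ?_⟩
  · intro p i
    have s1 := second_diff (h1 p) ((i : ℝ) + 1 / 2)
    have s2 := second_diff (h2 p) ((i : ℝ) + 1 / 2)
    simp only [u, g, ph]
    change _ = c2 p * -(2 - 2 * Real.cos (h1 p)) * Real.cos (h1 p * (i + 1 / 2)) -
      c1 p * -(2 - 2 * Real.cos (h2 p)) * Real.cos (h2 p * (i + 1 / 2))
    rw [show (((i + 2 : ℕ) : ℝ) - 1 / 2) = (i : ℝ) + 1 / 2 + 1 by push_cast; ring,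
      show (((i + 1 : ℕ) : ℝ) - 1 / 2) = (i : ℝ) + 1 / 2 by push_cast; ring,
      show ((i : ℝ) - 1 / 2) = (i : ℝ) + 1 / 2 - 1 by ring]
    linear_combination c2 p * s1 - c1 p * s2
  · intro p q hp hp' hq hq' hpq
    rw [Finset.sum_range_succ', hu0]
    simp_rw [hus]
    rw [comb_orth N _ _ _ _ _ _ _ _ (by omega) (by omega) (by omega) (by omega) (by omega)
      (by omega) (by omega) (by omega)]
    ring
  · intro p hp hp'
    rw [husq p hp hp']
    have := hc1 p hp'
    have := hc2 p hp'
    push_cast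
    nlinarith
  · intro p hp hp'
    rw [husq p hp hp']
    have := hc1 p hp'
    have := hc2 p hp'
    push_cast
    nlinarith
  · intro p q hp hp' hq hq' hpq
    simp only [g]
    rw [comb_orth N _ _ _ _ _ _ _ _ (by omega) (by omega) (by omega) (by omega) (by omega)
      (by omega) (by omega) (by omega)]
  · intro p hp hp'
    simp only [g]
    rw [comb_sq N _ _ _ _ (by omega) (by omega) (by omega) (by omega) (by omega)]
    have hB : h2 p ≤ 10 * p / N := by
      simp only [h2]
      have hp1 : (1 : ℝ) ≤ p := by exact_mod_cast hp
      refine div_le_div_of_nonneg_right ?_ (by positivity)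
      push_cast
      nlinarith [Real.pi_lt_d2]
    have l1 := lam_bd _ _ (hh1 p) ((hh12 p).trans hB)
    have l2 := lam_bd _ _ (hh2 p) hB
    have d1 := (hc1 p hp').2
    have d2 := (hc2 p hp').2
    set B : ℝ := 10 * p / N with hBd
    have hB0 : 0 ≤ B ^ 4 := by positivity
    have m1 : (c2 p * -(2 - 2 * Real.cos (h1 p))) ^ 2 ≤ B ^ 4 := by
      rw [mul_pow, neg_sq]
      calc _ ≤ 1 * B ^ 4 := mul_le_mul d2 l1 (sq_nonneg _) (by norm_num)
        _ = _ := one_mul _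
    have m2 : (c1 p * -(2 - 2 * Real.cos (h2 p))) ^ 2 ≤ B ^ 4 := by
      rw [mul_pow, neg_sq]
      calc _ ≤ 1 * B ^ 4 := mul_le_mul d1 l2 (sq_nonneg _) (by norm_num)
        _ = _ := one_mul _
    calc _ ≤ (B ^ 4 + B ^ 4) * ((N : ℝ) / 2) := by gcongr
      _ = 10000 * p ^ 4 / N ^ 3 := by rw [hBd]; field_simp; ring
      _ = 80000 * p ^ 4 / (N + N) ^ 3 := by field_simp; ring
      _ ≤ _ := by push_cast; gcongr


lemma sum_fin_prod {d : ℕ} (n : Fin d → ℕ) (f : Fin d → ℕ → ℝ) :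
    ∑ i : (∀ k : Fin d, Fin (n k)), ∏ k, f k (i k) = ∏ k, ∑ j ∈ Finset.range (n k), f k j := by
  have := Finset.prod_univ_sum (fun k => (Finset.univ : Finset (Fin (n k))))
    (fun k j => f k (j : ℕ))
  rw [Fintype.piFinset_univ] at this
  rw [← this]
  refine Finset.prod_congr rfl fun k _ => ?_
  rw [Finset.sum_range]

lemma mixed_prod {d : ℕ} {ι : Type*} [Fintype ι] (β : Fin d → ℕ) (c : ι → ℝ)
    (f : ι → Fin d → ℕ → ℝ) (i : Fin d → ℕ) :
    mixedDiff d β (fun j => ∑ p, c p * ∏ k, f p k (j k)) i =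
    ∑ p, c p * ∏ k, ∑ δ ∈ Finset.range (β k + 1),
      (-1 : ℝ) ^ δ * ((β k).choose δ : ℝ) * f p k (i k - δ) := by
  unfold mixedDiff
  simp_rw [Finset.prod_univ_sum, Finset.mul_sum]
  rw [Finset.sum_comm]
  refine Finset.sum_congr rfl fun p _ => Finset.sum_congr rfl fun δ _ => ?_
  rw [Finset.prod_mul_distrib, Finset.prod_mul_distrib, Finset.prod_pow_eq_pow_sum]
  ring

lemma ddim (d : ℕ) (hd : 1 ≤ d) (n : Fin d → ℕ) (hn : ∀ k, 2 ≤ n k) (S : Finset (Fin d → ℕ))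
    (R : ℝ) (hS : ∀ p ∈ S, ∀ k, 1 ≤ p k ∧ 3 * (2 * p k + 1) ≤ 2 * (n k - 1))
    (hR : ∀ p ∈ S, ∏ k, (p k : ℝ) ≤ R) :
    ∃ U : S → (∀ k : Fin d, Fin (n k)) → ℝ,
      (∀ p q, p ≠ q → ∑ i, U p i * U q i = 0) ∧
      (∀ p, (∏ k, (n k : ℝ)) / 8 ^ d ≤ ∑ i, U p i ^ 2) ∧
      (∀ p, ∑ i, U p i ^ 2 ≤ ∏ k, (n k : ℝ)) ∧
      ∀ a V : ℝ, 0 ≤ V → a ^ 2 * S.card * 80000 ^ d * R ^ 4 ≤ V ^ 2 → ∀ ε : S → Bool,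
        thet a U ε ∈ Cset d n V := by
  choose u g hu0 hu1 hug huo hul huu hgo hgu using fun k => oneD (n k) (hn k)
  have hnpos : ∀ k, (0 : ℝ) < n k := fun k => by
    have := hn k
    exact_mod_cast (by omega : 0 < n k)
  have hnp : 0 < ∏ k, (n k : ℝ) := Finset.prod_pos fun k _ => hnpos k
  have hne : ∀ p q : S, p ≠ q → ∃ k, p.1 k ≠ q.1 k := fun p q hpq => by
    by_contra hcon
    push Not at hcon
    exact hpq (Subtype.ext (funext hcon))
  refine ⟨fun p i => ∏ k, u k (p.1 k) (i k), ?_, ?_, ?_, ?_⟩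
  · intro p q hpq
    simp_rw [← Finset.prod_mul_distrib]
    rw [sum_fin_prod n (fun k j => u k (p.1 k) j * u k (q.1 k) j)]
    obtain ⟨k, hk⟩ := hne p q hpq
    exact Finset.prod_eq_zero (Finset.mem_univ k) (huo k _ _ (hS p.1 p.2 k).1 (hS p.1 p.2 k).2
      (hS q.1 q.2 k).1 (hS q.1 q.2 k).2 hk)
  · intro p
    simp_rw [← Finset.prod_pow]
    rw [sum_fin_prod n (fun k j => u k (p.1 k) j ^ 2)]
    calc (∏ k, (n k : ℝ)) / 8 ^ d = ∏ k, ((n k : ℝ) / 8) := by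
          rw [Finset.prod_div_distrib]; simp
      _ ≤ _ := Finset.prod_le_prod (fun k _ => by have := hnpos k; positivity)
          (fun k _ => hul k _ (hS p.1 p.2 k).1 (hS p.1 p.2 k).2)
  · intro p
    simp_rw [← Finset.prod_pow]
    rw [sum_fin_prod n (fun k j => u k (p.1 k) j ^ 2)]
    exact Finset.prod_le_prod (fun k _ => Finset.sum_nonneg fun _ _ => sq_nonneg _)
          (fun k _ => huu k _ (hS p.1 p.2 k).1 (hS p.1 p.2 k).2)
  · intro a V hV hVa ε
    set U : S → (∀ k : Fin d, Fin (n k)) → ℝ := fun p i => ∏ k, u k (p.1 k) (i k) with hU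
    set c : S → ℝ := fun p => a * sg (ε p) with hc
    have hbox : ∀ j : Fin d → ℕ, (∀ k, j k < n k) →
        latExtend d n (thet a U ε) j = ∑ p, c p * ∏ k, u k (p.1 k) (j k) := by
      intro j hj
      simp only [latExtend, dif_pos hj, thet, hU, hc]
    have hmix : ∀ β i : Fin d → ℕ, (∀ k, i k < n k) →
        mixedDiff d β (latExtend d n (thet a U ε)) i =
        ∑ p, c p * ∏ k, ∑ δ ∈ Finset.range (β k + 1),
          (-1 : ℝ) ^ δ * ((β k).choose δ : ℝ) * u k (p.1 k) (i k - δ) := by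
      intro β i hi
      rw [← mixed_prod β c (fun p k => u k (p.1 k)) i]
      unfold mixedDiff
      refine Finset.sum_congr rfl fun δ _ => ?_
      rw [hbox]
      intro k
      exact lt_of_le_of_lt (Nat.sub_le _ _) (hi k)
    have hsup2 : Finset.univ.sup (fun _ : Fin d => 2) = 2 :=
      Finset.sup_const ⟨⟨0, hd⟩, Finset.mem_univ _⟩ 2
    let G : S → (Fin d → ℕ) → ℝ := fun p j => ∏ k, g k (p.1 k) (j k)
    have hV2 : V2 d n (latExtend d n (thet a U ε)) =
        (∏ k, (n k : ℝ)) * ∑ i ∈ Fintype.piFinset (fun k => Finset.Ico 2 (n k)),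
          |∑ p, c p * G p (fun k => i k - 2)| := by
      unfold V2
      rw [Finset.sum_eq_single (fun _ => 2)]
      · have hidx : idxBeta d n (fun _ => 2) = Fintype.piFinset (fun k => Finset.Ico 2 (n k)) := by
          unfold idxBeta; rw [hsup2]; simp
        rw [hidx]
        congr 1
        · simp
        · refine Finset.sum_congr rfl fun i hi => ?_
          rw [Fintype.mem_piFinset] at hi
          rw [hmix _ _ (fun k => (Finset.mem_Ico.1 (hi k)).2)]
          congr 1
          refine Finset.sum_congr rfl fun p _ => ?_
          congr 1
          refine Finset.prod_congr rfl fun k _ => ?_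
          obtain ⟨m, hm⟩ : ∃ m, i k = m + 2 := ⟨i k - 2, by have := Finset.mem_Ico.1 (hi k); omega⟩
          simp only [Finset.sum_range_succ, Finset.sum_range_zero, hm]
          rw [← hug]
          norm_num [Nat.choose]
          ring
      · intro β hβ hne2
        rw [Finset.mem_filter, Fintype.mem_piFinset] at hβ
        obtain ⟨k, hk⟩ : ∃ k, β k ≠ 2 := by
          by_contra hcon
          push Not at hcon
          exact hne2 (funext hcon)
        have hk3 := Finset.mem_range.1 (hβ.1 k)
        rw [Finset.sum_eq_zero, mul_zero]
        intro i hi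
        unfold idxBeta at hi
        rw [Fintype.mem_piFinset, hβ.2] at hi
        have hlt : ∀ k, i k < n k := by
          intro k
          have h := hi k
          split_ifs at h with h2
          · exact (Finset.mem_Ico.1 h).2
          · have := Finset.mem_singleton.1 h
            have := Finset.mem_range.1 (hβ.1 k)
            have := hn k
            omega
        rw [hmix _ _ hlt, abs_eq_zero]
        refine Finset.sum_eq_zero fun p _ => ?_
        rw [Finset.prod_eq_zero (Finset.mem_univ k), mul_zero]
        have hik : i k = β k := by
          have h := hi k
          rw [if_neg hk] at h
          exact Finset.mem_singleton.1 h
        rw [hik]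
        have : β k = 0 ∨ β k = 1 := by omega
        rcases this with h | h <;> rw [h] <;> simp [Finset.sum_range_succ, hu0, hu1]
      · intro hcon
        exfalso
        apply hcon
        rw [Finset.mem_filter, Fintype.mem_piFinset]
        exact ⟨fun k => by simp, hsup2⟩
    have hGo : ∀ p q : S, p ≠ q →
        ∑ i ∈ Fintype.piFinset (fun k => Finset.range (n k - 1)), G p i * G q i = 0 := by
      intro p q hpq
      simp only [G]
      simp_rw [← Finset.prod_mul_distrib]
      rw [← Finset.prod_univ_sum (fun k => Finset.range (n k - 1))
        (fun k j => g k (p.1 k) j * g k (q.1 k) j)]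
      obtain ⟨k, hk⟩ := hne p q hpq
      exact Finset.prod_eq_zero (Finset.mem_univ k) (hgo k _ _ (hS p.1 p.2 k).1 (hS p.1 p.2 k).2
        (hS q.1 q.2 k).1 (hS q.1 q.2 k).2 hk)
    have hGu : ∀ p : S, ∑ i ∈ Fintype.piFinset (fun k => Finset.range (n k - 1)), G p i ^ 2 ≤
        80000 ^ d * R ^ 4 / (∏ k, (n k : ℝ)) ^ 3 := by
      intro p
      simp only [G]
      simp_rw [← Finset.prod_pow]
      rw [← Finset.prod_univ_sum (fun k => Finset.range (n k - 1))
        (fun k j => g k (p.1 k) j ^ 2)]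
      calc _ ≤ ∏ k, (80000 * (p.1 k : ℝ) ^ 4 / (n k : ℝ) ^ 3) :=
            Finset.prod_le_prod (fun k _ => Finset.sum_nonneg fun _ _ => sq_nonneg _)
              (fun k _ => hgu k _ (hS p.1 p.2 k).1 (hS p.1 p.2 k).2)
        _ = 80000 ^ d * (∏ k, (p.1 k : ℝ)) ^ 4 / (∏ k, (n k : ℝ)) ^ 3 := by
            rw [Finset.prod_div_distrib, Finset.prod_mul_distrib, Finset.prod_pow, Finset.prod_pow]
            simp
        _ ≤ _ := by
            have := hR p.1 p.2
            simp only [Finset.prod_pow]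
            have h0 : 0 ≤ ∏ k, (p.1 k : ℝ) := Finset.prod_nonneg fun k _ => by positivity
            gcongr
    have hcard : ((Fintype.piFinset (fun k => Finset.Ico 2 (n k))).card : ℝ) ≤ ∏ k, (n k : ℝ) := by
      rw [Fintype.card_piFinset]
      push_cast
      refine Finset.prod_le_prod (fun k _ => by positivity) (fun k _ => ?_)
      rw [Nat.card_Ico]
      exact_mod_cast Nat.sub_le _ _
    have hsum : ∑ i ∈ Fintype.piFinset (fun k => Finset.Ico 2 (n k)),
          (∑ p, c p * G p (fun k => i k - 2)) ^ 2 ≤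
        ∑ j ∈ Fintype.piFinset (fun k => Finset.range (n k - 1)), (∑ p, c p * G p j) ^ 2 := by
      rw [← Finset.sum_image (s := Fintype.piFinset (fun k => Finset.Ico 2 (n k)))
        (g := fun i k => i k - 2) (f := fun j => (∑ p, c p * G p j) ^ 2)]
      · refine Finset.sum_le_sum_of_subset_of_nonneg ?_ (fun _ _ _ => sq_nonneg _)
        intro j hj
        obtain ⟨i, hi, rfl⟩ := Finset.mem_image.1 hj
        rw [Fintype.mem_piFinset] at hi ⊢
        intro k
        have := Finset.mem_Ico.1 (hi k)
        rw [Finset.mem_range]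
        omega
      · intro i hi i' hi' h
        have hi := Fintype.mem_piFinset.1 hi
        have hi' := Fintype.mem_piFinset.1 hi'
        funext k
        have h1 := Finset.mem_Ico.1 (hi k)
        have h2 := Finset.mem_Ico.1 (hi' k)
        have h3 := congrFun h k
        simp only at h3
        omega
    have htot : ∑ j ∈ Fintype.piFinset (fun k => Finset.range (n k - 1)), (∑ p, c p * G p j) ^ 2 ≤
        a ^ 2 * S.card * (80000 ^ d * R ^ 4 / (∏ k, (n k : ℝ)) ^ 3) := by
      rw [orth_sq _ G hGo c]
      calc _ ≤ ∑ _p : S, a ^ 2 * (80000 ^ d * R ^ 4 / (∏ k, (n k : ℝ)) ^ 3) := by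
            refine Finset.sum_le_sum fun p _ => ?_
            have : c p ^ 2 = a ^ 2 := by simp only [hc]; rw [mul_pow, sg_sq, mul_one]
            rw [this]
            exact mul_le_mul_of_nonneg_left (hGu p) (sq_nonneg _)
        _ = _ := by
            rw [Finset.sum_const, Finset.card_univ, Fintype.card_coe, nsmul_eq_mul]; ring
    change V2 d n (latExtend d n (thet a U ε)) ≤ V
    rw [hV2]
    refine le_trans (le_abs_self _) (abs_le_of_sq_le_sq ?_ hV)
    refine le_trans ?_ hVa
    rw [mul_pow]
    have hcs := sq_sum_le_card_mul_sum_sq (s := Fintype.piFinset (fun k => Finset.Ico 2 (n k)))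
      (f := fun i => |∑ p, c p * G p (fun k => i k - 2)|)
    simp only [sq_abs] at hcs
    have hfin := hcs.trans (mul_le_mul hcard (hsum.trans htot)
      (Finset.sum_nonneg fun _ _ => sq_nonneg _) hnp.le)
    calc _ ≤ (∏ k, (n k : ℝ)) ^ 2 * ((∏ k, (n k : ℝ)) *
          (a ^ 2 * S.card * (80000 ^ d * R ^ 4 / (∏ k, (n k : ℝ)) ^ 3))) :=
          mul_le_mul_of_nonneg_left hfin (sq_nonneg _)
      _ = _ := by field_simp


lemma log_sum (a b : ℕ) (ha : 1 ≤ a) (hab : a ≤ b) :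
    Real.log b - Real.log a ≤ ∑ p ∈ Finset.Ico a b, (p : ℝ)⁻¹ := by
  induction b, hab using Nat.le_induction with
  | base => simp
  | succ m hm ih =>
    rw [Finset.sum_Ico_succ_top hm]
    have hm0 : (0 : ℝ) < m := by exact_mod_cast (by omega : 0 < m)
    have : Real.log ((m + 1 : ℕ) : ℝ) - Real.log m ≤ (m : ℝ)⁻¹ := by
      rw [← Real.log_div (by positivity) (by positivity)]
      refine (Real.log_le_sub_one_of_pos (by positivity)).trans (le_of_eq ?_)
      push_cast
      field_simp
      ring
    linarith

lemma count (e s : ℕ) (hs : 1 ≤ s) : ∃ S : Finset (Fin (e + 1) → ℕ),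
    (∀ p ∈ S, ∀ k, 1 ≤ p k ∧ p k ≤ s ^ (2 * e + 1)) ∧
    (∀ p ∈ S, ∏ k, (p k : ℝ) ≤ (s : ℝ) ^ ((e + 1) ^ 2)) ∧
    (s : ℝ) ^ ((e + 1) ^ 2) / 2 * (Real.log s) ^ e ≤ S.card := by
  classical
  set R := s ^ ((e + 1) ^ 2) with hR
  set Q : Finset (Fin e → ℕ) := Fintype.piFinset (fun _ => Finset.Ico (s ^ e) (s ^ (e + 1)))
    with hQ
  have hq : ∀ q ∈ Q, ∀ k, s ^ e ≤ q k ∧ q k < s ^ (e + 1) := fun q hq k =>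
    Finset.mem_Ico.1 (Fintype.mem_piFinset.1 hq k)
  have hse : 1 ≤ s ^ e := Nat.one_le_pow _ _ hs
  have hqlo : ∀ q ∈ Q, s ^ (e * e) ≤ ∏ k, q k := fun q h => by
    calc s ^ (e * e) = ∏ _k : Fin e, s ^ e := by simp [pow_mul]
      _ ≤ _ := Finset.prod_le_prod' fun k _ => (hq q h k).1
  have hqhi : ∀ q ∈ Q, ∏ k, q k ≤ s ^ ((e + 1) * e) := fun q h => by
    calc ∏ k, q k ≤ ∏ _k : Fin e, s ^ (e + 1) :=
          Finset.prod_le_prod' fun k _ => (hq q h k).2.le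
      _ = _ := by simp [pow_mul]
  have hqpos : ∀ q ∈ Q, 0 < ∏ k, q k := fun q h =>
    lt_of_lt_of_le (Nat.one_le_pow _ _ hs) (hqlo q h)
  have hqR : ∀ q ∈ Q, ∏ k, q k ≤ R := fun q h =>
    (hqhi q h).trans (Nat.pow_le_pow_right hs (by nlinarith))
  let F : (Σ _ : Fin e → ℕ, ℕ) → (Fin (e + 1) → ℕ) := fun x => Fin.cons x.2 x.1
  let S0 : Finset (Σ _ : Fin e → ℕ, ℕ) := Q.sigma fun q => Finset.Icc 1 (R / ∏ k, q k)
  have hinj : Function.Injective F := by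
    rintro ⟨q, m⟩ ⟨q', m'⟩ h
    have h' := Fin.cons_inj.1 h
    simp only at h'
    rw [h'.1, h'.2]
  refine ⟨S0.image F, ?_, ?_, ?_⟩
  · intro p hp
    obtain ⟨⟨q, m⟩, hx, rfl⟩ := Finset.mem_image.1 hp
    obtain ⟨hqQ, hm⟩ := Finset.mem_sigma.1 hx
    simp only at hqQ hm
    rw [Finset.mem_Icc] at hm
    intro k
    refine Fin.cases ?_ (fun k => ?_) k
    · simp only [F, Fin.cons_zero]
      refine ⟨hm.1, hm.2.trans ?_⟩
      have h1 : R / ∏ k, q k ≤ R / s ^ (e * e) :=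
        Nat.div_le_div_left (hqlo q hqQ) (Nat.one_le_pow _ _ hs)
      refine h1.trans (le_of_eq ?_)
      rw [hR, Nat.pow_div (by nlinarith) hs]
      congr 1
      have : (e + 1) ^ 2 = e * e + (2 * e + 1) := by ring
      omega
    · simp only [F, Fin.cons_succ]
      have := hq q hqQ k
      exact ⟨hse.trans this.1, this.2.le.trans (Nat.pow_le_pow_right hs (by omega))⟩
  · intro p hp
    obtain ⟨⟨q, m⟩, hx, rfl⟩ := Finset.mem_image.1 hp
    obtain ⟨hqQ, hm⟩ := Finset.mem_sigma.1 hx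
    simp only at hqQ hm
    rw [Finset.mem_Icc] at hm
    rw [Fin.prod_univ_succ]
    simp only [F, Fin.cons_zero, Fin.cons_succ]
    have : m * ∏ k, q k ≤ R := (Nat.mul_le_mul_right _ hm.2).trans (Nat.div_mul_le_self _ _)
    exact_mod_cast this
  · rw [Finset.card_image_of_injective _ hinj, Finset.card_sigma]
    simp only [Nat.card_Icc, Nat.add_sub_cancel]
    push_cast
    have hterm : ∀ q ∈ Q, (R : ℝ) / 2 * ∏ k, (q k : ℝ)⁻¹ ≤ ((R / ∏ k, q k : ℕ) : ℝ) := by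
      intro q h
      have h0 := hqpos q h
      have h1 : 1 ≤ R / ∏ k, q k := (Nat.one_le_div_iff h0).2 (hqR q h)
      have h2 := Nat.lt_mul_div_succ R h0
      have h3 : R ≤ 2 * ((∏ k, q k) * (R / ∏ k, q k)) := by nlinarith
      have h4 : (R : ℝ) ≤ 2 * ((∏ k, (q k : ℝ)) * ((R / ∏ k, q k : ℕ) : ℝ)) := by exact_mod_cast h3
      have h5 : (0 : ℝ) < ∏ k, (q k : ℝ) := by exact_mod_cast h0
      rw [Finset.prod_inv_distrib, ← div_eq_mul_inv, div_le_iff₀ h5]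
      linarith
    refine le_trans ?_ (Finset.sum_le_sum hterm)
    rw [← Finset.mul_sum, hQ, ← Finset.prod_univ_sum (fun _ : Fin e => Finset.Ico (s ^ e) (s ^ (e + 1)))
      (fun _ j => (j : ℝ)⁻¹)]
    simp only [Finset.prod_const, Finset.card_univ, Fintype.card_fin]
    have hl := log_sum (s ^ e) (s ^ (e + 1)) hse (Nat.pow_le_pow_right hs (by omega))
    push_cast at hl
    rw [Real.log_pow, Real.log_pow] at hl
    have hl' : Real.log s ≤ ∑ p ∈ Finset.Ico (s ^ e) (s ^ (e + 1)), (p : ℝ)⁻¹ := by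
      refine le_trans (le_of_eq ?_) hl
      push_cast; ring
    have hl0 : 0 ≤ Real.log s := Real.log_natCast_nonneg s
    rw [hR]
    push_cast
    gcongr


lemma asym (e : ℕ) : ∃ A0 : ℝ, 1 ≤ A0 ∧ ∃ c0 : ℝ, 0 < c0 ∧ ∀ A, A0 ≤ A →
    1 ≤ Real.log A ∧ ∃ s : ℕ, 1 ≤ s ∧
      (s : ℝ) ^ (2 * e + 1) ≤ A ^ ((4 : ℝ) / (5 * ((e : ℝ) + 1))) ∧
      c0 * (A ^ ((2 : ℝ) / 5) * Real.log A ^ (4 * (e : ℝ) / 5)) ≤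
        (s : ℝ) ^ ((e + 1) ^ 2) / 2 * (Real.log s) ^ e ∧
      c0 * (A ^ ((2 : ℝ) / 5) * Real.log A ^ (4 * (e : ℝ) / 5)) * ((s : ℝ) ^ ((e + 1) ^ 2)) ^ 4
        ≤ A ^ 2 := by
  set D2 : ℕ := (e + 1) ^ 2 with hD2
  have hD2pos : 0 < D2 := by positivity
  have hD2r : (0 : ℝ) < D2 := by exact_mod_cast hD2pos
  have ev1 : ∀ᶠ A : ℝ in Filter.atTop, 1 ≤ Real.log A :=
    Real.tendsto_log_atTop.eventually_ge_atTop 1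
  have ev2 : ∀ᶠ A : ℝ in Filter.atTop, ‖Real.log A ^ e‖ ≤ 1 * ‖A‖ :=
    (Real.isLittleO_pow_log_id_atTop (n := e)).bound one_pos
  have ev3 : ∀ᶠ A : ℝ in Filter.atTop, 2 ≤ A ^ ((1 : ℝ) / (10 * D2)) :=
    (tendsto_rpow_atTop (by positivity)).eventually_ge_atTop 2
  obtain ⟨A1, hA1⟩ := Filter.eventually_atTop.1 (ev1.and (ev2.and ev3))
  refine ⟨max 1 A1, le_max_left _ _, 1 / (2 * 2 ^ D2 * (10 * D2) ^ e), by positivity, ?_⟩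
  intro A hA
  obtain ⟨hL, h2, h3⟩ := hA1 A ((le_max_right _ _).trans hA)
  have hA1' : 1 ≤ A := (le_max_left _ _).trans hA
  have hA0 : 0 < A := by linarith
  refine ⟨hL, ?_⟩
  set L := Real.log A with hLd
  have hL0 : 0 < L := by linarith
  have h2' : L ^ e ≤ A := by
    rw [one_mul, Real.norm_of_nonneg (by positivity), Real.norm_of_nonneg hA0.le] at h2
    exact h2
  have hLe1 : 1 ≤ L ^ e := one_le_pow₀ hL
  set Y := A ^ 2 / L ^ e with hY
  have hY0 : 0 < Y := by positivity
  have hYlo : A ≤ Y := by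
    rw [hY, le_div_iff₀ (by positivity)]; nlinarith
  have hYhi : Y ≤ A ^ 2 := div_le_self (by positivity) hLe1
  set X := Y ^ ((1 : ℝ) / 5) with hX
  have hX0 : 0 < X := by positivity
  have hX5 : X ^ 5 = Y := by
    rw [hX, ← Real.rpow_natCast, ← Real.rpow_mul hY0.le]; norm_num
  set Z := X ^ ((1 : ℝ) / D2) with hZ
  have hZ0 : 0 < Z := by positivity
  have hZD : Z ^ D2 = X := by
    rw [hZ, ← Real.rpow_natCast, ← Real.rpow_mul hX0.le, one_div, inv_mul_cancel₀ hD2r.ne',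
      Real.rpow_one]
  have hZlo : 2 * A ^ ((1 : ℝ) / (10 * D2)) ≤ Z := by
    have : A ^ ((1 : ℝ) / (10 * D2)) * A ^ ((1 : ℝ) / (10 * D2)) ≤ Z := by
      rw [← Real.rpow_add hA0, hZ, hX, ← Real.rpow_mul hY0.le]
      have : (1 : ℝ) / (10 * D2) + 1 / (10 * D2) = 1 / 5 * (1 / D2) := by field_simp; norm_num
      rw [this]
      exact Real.rpow_le_rpow hA0.le hYlo (by positivity)
    refine le_trans ?_ this
    gcongr
  have hZ4 : 4 ≤ Z := by linarith
  set s := ⌊Z⌋₊ with hs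
  have hsle : (s : ℝ) ≤ Z := Nat.floor_le hZ0.le
  have hslt : Z < s + 1 := Nat.lt_floor_add_one Z
  have hs1 : 1 ≤ s := by
    rw [hs, Nat.one_le_floor_iff]; linarith
  have hs1r : (1 : ℝ) ≤ s := by exact_mod_cast hs1
  have hshalf : Z / 2 ≤ s := by linarith
  have hXL : A ^ ((2 : ℝ) / 5) * L ^ (4 * (e : ℝ) / 5) = X * L ^ e := by
    rw [hX, hY, Real.div_rpow (by positivity) (by positivity)]
    have key : L ^ (4 * (e : ℝ) / 5) = L ^ (e : ℝ) / L ^ ((e : ℝ) * (1 / 5)) := by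
      rw [← Real.rpow_sub hL0]; congr 1; ring
    have key2 : A ^ ((2 : ℝ) / 5) = A ^ (((2 : ℕ) : ℝ) * (1 / 5)) := by norm_num
    rw [← Real.rpow_natCast A 2, ← Real.rpow_mul hA0.le, ← Real.rpow_natCast L e,
      ← Real.rpow_mul hL0.le, key, key2]
    ring
  rw [hXL]
  have hsX : (s : ℝ) ^ D2 ≤ X := by
    rw [← hZD]; gcongr
  refine ⟨s, hs1, ?_, ?_, ?_⟩
  · have hsA : (s : ℝ) ≤ A ^ ((2 : ℝ) / (5 * D2)) := by
      refine hsle.trans ?_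
      rw [hZ, hX, ← Real.rpow_mul hY0.le]
      calc Y ^ ((1 : ℝ) / 5 * (1 / D2)) ≤ (A ^ 2) ^ ((1 : ℝ) / 5 * (1 / D2)) :=
            Real.rpow_le_rpow hY0.le hYhi (by positivity)
        _ = _ := by
            rw [← Real.rpow_natCast A 2, ← Real.rpow_mul hA0.le]
            congr 1
            push_cast
            field_simp
    calc (s : ℝ) ^ (2 * e + 1) ≤ (s : ℝ) ^ (2 * (e + 1)) := pow_le_pow_right₀ hs1r (by omega)
      _ ≤ (A ^ ((2 : ℝ) / (5 * D2))) ^ (2 * (e + 1)) := by gcongr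
      _ = _ := by
          rw [← Real.rpow_natCast, ← Real.rpow_mul hA0.le]
          congr 1
          rw [hD2]
          push_cast
          field_simp
          norm_num
  · have hlog : L / (10 * D2) ≤ Real.log s := by
      have : A ^ ((1 : ℝ) / (10 * D2)) ≤ s := by linarith
      have := Real.log_le_log (by positivity) this
      rw [Real.log_rpow hA0] at this
      refine le_trans (le_of_eq ?_) this
      ring
    have hsp : X / 2 ^ D2 ≤ (s : ℝ) ^ D2 := by
      rw [← hZD, ← div_pow]
      gcongr
    calc 1 / (2 * 2 ^ D2 * (10 * (D2 : ℝ)) ^ e) * (X * L ^ e)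
        = (X / 2 ^ D2) / 2 * (L / (10 * D2)) ^ e := by
          rw [div_pow]; field_simp
      _ ≤ _ := by gcongr
  · have hc : 1 / (2 * 2 ^ D2 * (10 * (D2 : ℝ)) ^ e) ≤ 1 := by
      rw [div_le_one (by positivity)]
      have a1 : (1 : ℝ) ≤ 2 ^ D2 := one_le_pow₀ (by norm_num)
      have a0 : (1 : ℝ) ≤ D2 := by exact_mod_cast hD2pos
      have a2 : (1 : ℝ) ≤ (10 * (D2 : ℝ)) ^ e := one_le_pow₀ (by linarith)
      nlinarith
    calc _ ≤ 1 * (X * L ^ e) * X ^ 4 := by gcongr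
      _ = X ^ 5 * L ^ e := by ring
      _ = A ^ 2 := by rw [hX5, hY]; field_simp


lemma le_of_sq_le_sq_aux {x y : ℝ} (hy : 0 ≤ y) (h : x ^ 2 ≤ y ^ 2) : x ≤ y :=
  le_of_sq_le_sq h hy

lemma rate_aux (σ V N : ℝ) (hσ : 0 < σ) (hV : 0 < V) (hN : 0 < N) :
    (σ ^ 2 * V ^ ((1 : ℝ) / 2) / N) ^ ((4 : ℝ) / 5)
      = σ ^ 2 / N * (V * N ^ ((1 : ℝ) / 2) / σ) ^ ((2 : ℝ) / 5) := by
  apply Real.log_injOn_pos (Set.mem_Ioi.2 (by positivity)) (Set.mem_Ioi.2 (by positivity))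
  rw [Real.log_rpow (by positivity), Real.log_div (by positivity) (by positivity),
    Real.log_mul (by positivity) (by positivity), Real.log_pow, Real.log_rpow hV,
    Real.log_mul (by positivity) (by positivity), Real.log_div (by positivity) (by positivity),
    Real.log_pow, Real.log_rpow (by positivity), Real.log_div (by positivity) (by positivity),
    Real.log_mul (by positivity) (by positivity), Real.log_rpow hN]
  push_cast
  ring

lemma range_aux (e : ℕ) (b N A p m r : ℝ) (hb : 0 < b) (hN : 0 < N) (hA : 0 < A) (hr : 0 < r)
    (hA2 : A ^ 2 = N / r) (h1 : (6 / b) ^ (2 * (e + 1)) ≤ N) (h3 : (1 / r) ^ 4 ≤ N)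
    (hm : b * N ^ ((1 : ℝ) / ((e : ℝ) + 1)) ≤ m)
    (hp : p ≤ A ^ ((4 : ℝ) / (5 * ((e : ℝ) + 1)))) : 11 * p ≤ 2 * m := by
  set y : ℝ := N ^ ((1 : ℝ) / (2 * ((e : ℝ) + 1))) with hy
  have hy0 : 0 < y := by positivity
  have hyy : N ^ ((1 : ℝ) / ((e : ℝ) + 1)) = y * y := by
    rw [hy, ← Real.rpow_add hN]
    congr 1
    field_simp
    norm_num
  have hy6 : 6 / b ≤ y := by
    have := Real.rpow_le_rpow (by positivity) h1
      (by positivity : (0 : ℝ) ≤ (1 : ℝ) / (2 * ((e : ℝ) + 1)))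
    refine le_trans (le_of_eq ?_) this
    rw [← Real.rpow_natCast, ← Real.rpow_mul (by positivity)]
    have : ((2 * (e + 1) : ℕ) : ℝ) * (1 / (2 * ((e : ℝ) + 1))) = 1 := by
      push_cast; field_simp
    rw [this, Real.rpow_one]
  have hA8 : A ^ 8 ≤ N ^ 5 := by
    calc A ^ 8 = (A ^ 2) ^ 4 := by ring
      _ = N ^ 4 * (1 / r) ^ 4 := by rw [hA2]; ring
      _ ≤ N ^ 4 * N := by gcongr
      _ = N ^ 5 := by ring
  have hAy : A ^ ((4 : ℝ) / (5 * ((e : ℝ) + 1))) ≤ y := by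
    have := Real.rpow_le_rpow (by positivity) hA8
      (by positivity : (0 : ℝ) ≤ (1 : ℝ) / (10 * ((e : ℝ) + 1)))
    rw [← Real.rpow_natCast, ← Real.rpow_natCast, ← Real.rpow_mul hA.le,
      ← Real.rpow_mul hN.le] at this
    have e1 : ((8 : ℕ) : ℝ) * (1 / (10 * ((e : ℝ) + 1))) = 4 / (5 * ((e : ℝ) + 1)) := by
      push_cast; field_simp; norm_num
    have e2 : ((5 : ℕ) : ℝ) * (1 / (10 * ((e : ℝ) + 1))) = 1 / (2 * ((e : ℝ) + 1)) := by
      push_cast; field_simp; norm_num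
    rw [e1, e2] at this
    exact this
  rw [hyy] at hm
  rw [div_le_iff₀ hb] at hy6
  nlinarith

/-- Minimax lower bound over `C(V)` on the equally spaced lattice
design: for any (Borel-measurable) estimator `T`, some `θ* ∈ C(V)` has risk at least
`C_{b,d} (σ² V^{1/2}/n)^{4/5} (log(V n^{1/2}/σ))^{4(d-1)/5}`, provided `n ≥ c(σ²/V²)`. -/
theorem statement2 (d : ℕ) (hd : 1 ≤ d) (b : ℝ) (hb0 : 0 < b) (hb1 : b ≤ 1) :
    ∃ C : ℝ, 0 < C ∧ ∃ c : ℝ → ℝ, (∀ r, 0 < r → 0 < c r) ∧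
      ∀ n : Fin d → ℕ, (∀ k, 2 ≤ n k) →
      (∀ k, b * (∏ j, (n j : ℝ)) ^ ((1 : ℝ) / (d : ℝ)) ≤ (n k : ℝ)) →
      ∀ σ V : ℝ, 0 < σ → 0 < V →
      c (σ ^ 2 / V ^ 2) ≤ (∏ j, (n j : ℝ)) →
      ∀ T : ((∀ k : Fin d, Fin (n k)) → ℝ) → (∀ k : Fin d, Fin (n k)) → ℝ,
        Measurable T →
      ∃ θstar ∈ Cset d n V,
        ENNReal.ofReal
            (C * (σ ^ 2 * V ^ ((1 : ℝ) / 2) / ∏ j, (n j : ℝ)) ^ ((4 : ℝ) / 5) *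
              Real.log (V * (∏ j, (n j : ℝ)) ^ ((1 : ℝ) / 2) / σ) ^
                (4 * ((d : ℝ) - 1) / 5)) ≤
          ∫⁻ ξ, ENNReal.ofReal ((∏ j, (n j : ℝ))⁻¹ *
              ∑ i, (T (θstar + ξ) i - θstar i) ^ 2) ∂(gaussPi d n σ) := by
  obtain ⟨e, rfl⟩ : ∃ e, d = e + 1 := ⟨d - 1, by omega⟩
  obtain ⟨A0, hA0, c0, hc0, hasym⟩ := asym e
  refine ⟨c0 / ((80000 : ℝ) ^ (e + 1) * 8 ^ (e + 1)) * Real.exp (-1), by positivity,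
    fun r => (6 / b) ^ (2 * (e + 1)) + A0 ^ 2 * r + (1 / r) ^ 4, ?_, ?_⟩
  · intro r hr
    positivity
  intro n hn hbn σ V hσ hV hc T hT
  have hnpos : ∀ k, (0 : ℝ) < n k := fun k => by
    have := hn k
    exact_mod_cast (by omega : 0 < n k)
  set N : ℝ := ∏ j, (n j : ℝ) with hN
  have hN0 : 0 < N := Finset.prod_pos fun k _ => hnpos k
  set A : ℝ := V * N ^ ((1 : ℝ) / 2) / σ with hA
  have hApos : 0 < A := by positivity
  have hA2 : A ^ 2 = V ^ 2 * N / σ ^ 2 := by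
    rw [hA, ← Real.sqrt_eq_rpow, div_pow, mul_pow, Real.sq_sqrt hN0.le]
  have hq1 : 0 < (6 / b) ^ (2 * (e + 1)) := by positivity
  have hq2 : 0 < A0 ^ 2 * (σ ^ 2 / V ^ 2) := by positivity
  have hq3 : 0 < (1 / (σ ^ 2 / V ^ 2)) ^ 4 := by positivity
  have hc1 : (6 / b) ^ (2 * (e + 1)) ≤ N := by simp only at hc; linarith
  have hc2 : A0 ^ 2 * (σ ^ 2 / V ^ 2) ≤ N := by simp only at hc; linarith
  have hc3 : (1 / (σ ^ 2 / V ^ 2)) ^ 4 ≤ N := by simp only at hc; linarith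
  have hAA0 : A0 ≤ A := by
    refine le_of_sq_le_sq_aux hApos.le ?_
    rw [hA2, le_div_iff₀ (by positivity)]
    rw [← mul_div_assoc, div_le_iff₀ (by positivity)] at hc2
    linarith
  obtain ⟨hL, s, hs1, hsA, hcard, hsR⟩ := hasym A hAA0
  obtain ⟨S, hS1, hSR, hScard⟩ := count e s hs1
  set R : ℝ := (s : ℝ) ^ ((e + 1) ^ 2) with hR
  have hs0 : (0 : ℝ) < s := by exact_mod_cast hs1
  have hR0 : 0 < R := by positivity
  set Q : ℝ := A ^ ((2 : ℝ) / 5) * Real.log A ^ (4 * (e : ℝ) / 5) with hQ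
  have hL0 : 0 < Real.log A := by linarith
  have hQ0 : 0 < Q := by positivity
  have hM : c0 * Q ≤ (S.card : ℝ) := hcard.trans hScard
  have hM0 : (0 : ℝ) < S.card := lt_of_lt_of_le (by positivity) hM
  have hSn : ∀ p ∈ S, ∀ k, 1 ≤ p k ∧ 3 * (2 * p k + 1) ≤ 2 * (n k - 1) := by
    intro p hp k
    obtain ⟨h1, h2⟩ := hS1 p hp k
    refine ⟨h1, ?_⟩
    have h3 : (p k : ℝ) ≤ A ^ ((4 : ℝ) / (5 * ((e : ℝ) + 1))) := by
      refine le_trans ?_ hsA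
      exact_mod_cast h2
    have h4 := range_aux e b N A (p k) (n k) (σ ^ 2 / V ^ 2) hb0 hN0 hApos (by positivity)
      (by rw [hA2]; field_simp) hc1 hc3 (by have := hbn k; push_cast at this; exact this) h3
    have h5 : 11 * p k ≤ 2 * n k := by exact_mod_cast h4
    omega
  obtain ⟨U, ho, hl, hu, hmem⟩ := ddim (e + 1) hd n hn S R hSn hSR
  set K : ℝ := (80000 : ℝ) ^ (e + 1) with hK
  have hK1 : 1 ≤ K := one_le_pow₀ (by norm_num)
  have hm0 : 0 ≤ min (σ ^ 2 / N) (V ^ 2 / (K * R ^ 4 * S.card)) := by positivity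
  set a : ℝ := Real.sqrt (min (σ ^ 2 / N) (V ^ 2 / (K * R ^ 4 * S.card))) with ha
  have ha2 : a ^ 2 = min (σ ^ 2 / N) (V ^ 2 / (K * R ^ 4 * S.card)) := Real.sq_sqrt hm0
  have haσ : a ^ 2 * N ≤ σ ^ 2 := by
    rw [← le_div_iff₀ hN0, ha2]; exact min_le_left _ _
  have haV : a ^ 2 * S.card * K * R ^ 4 ≤ V ^ 2 := by
    have : a ^ 2 * (K * R ^ 4 * S.card) ≤ V ^ 2 := by
      rw [← le_div_iff₀ (by positivity), ha2]; exact min_le_right _ _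
    linarith
  obtain ⟨ε, hε⟩ := assouad σ hσ ⟨σ ^ 2, sq_nonneg σ⟩ rfl U a (N / 8 ^ (e + 1)) (by positivity)
    ho hl (fun p => le_trans (mul_le_mul_of_nonneg_left (hu p) (sq_nonneg a)) haσ) T hT
  refine ⟨thet a U ε, hmem a V hV.le haV ε, ?_⟩
  have hpull : ∫⁻ ξ, ENNReal.ofReal (N⁻¹ * ∑ i, (T (thet a U ε + ξ) i - thet a U ε i) ^ 2)
        ∂(gaussPi (e + 1) n σ)
      = ENNReal.ofReal N⁻¹ * ∫⁻ ξ, ENNReal.ofReal (∑ i, (T (thet a U ε + ξ) i - thet a U ε i) ^ 2)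
        ∂(gaussPi (e + 1) n σ) := by
    rw [← lintegral_const_mul' _ _ ENNReal.ofReal_ne_top]
    congr 1
    funext ξ
    rw [ENNReal.ofReal_mul (by positivity)]
  rw [hpull]
  refine le_trans ?_ (mul_le_mul_right hε _)
  rw [← ENNReal.ofReal_mul (by positivity)]
  apply ENNReal.ofReal_le_ofReal
  rw [rate_aux σ V N hσ hV hN0]
  rw [Fintype.card_coe]
  have hexp : 4 * (((e + 1 : ℕ) : ℝ) - 1) / 5 = 4 * (e : ℝ) / 5 := by push_cast; ring
  rw [hexp]
  have hmain : σ ^ 2 / N * (c0 / K) * Q ≤ a ^ 2 * S.card := by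
    rw [ha2, min_mul_of_nonneg _ _ hM0.le]
    refine le_min ?_ ?_
    · rw [mul_assoc]
      refine mul_le_mul_of_nonneg_left ?_ (by positivity)
      refine le_trans ?_ hM
      refine mul_le_mul_of_nonneg_right (div_le_self hc0.le hK1) hQ0.le
    · have h1 : V ^ 2 / (K * R ^ 4 * S.card) * S.card = V ^ 2 / (K * R ^ 4) := by
        field_simp
      rw [h1, le_div_iff₀ (by positivity)]
      have h2 : V ^ 2 = σ ^ 2 / N * A ^ 2 := by rw [hA2]; field_simp
      rw [h2]
      calc σ ^ 2 / N * (c0 / K) * Q * (K * R ^ 4) = σ ^ 2 / N * (c0 * Q * R ^ 4) := by field_simp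
        _ ≤ _ := mul_le_mul_of_nonneg_left hsR (by positivity)
  calc c0 / (K * 8 ^ (e + 1)) * Real.exp (-1) * (σ ^ 2 / N * A ^ ((2 : ℝ) / 5)) *
        Real.log A ^ (4 * (e : ℝ) / 5)
      = (σ ^ 2 / N * (c0 / K) * Q) * (Real.exp (-1) / 8 ^ (e + 1)) := by
        rw [hQ]; field_simp
    _ ≤ (a ^ 2 * S.card) * (Real.exp (-1) / 8 ^ (e + 1)) :=
        mul_le_mul_of_nonneg_right hmain (by positivity)
    _ = _ := by field_simp
end
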